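/- arXiv:2306.07161 — 2 statements merged into one kernel-verified Lean document; each statement's English description precedes it below -/
import Mathlib

section
/- Fix integers n ≥ 2 and d ≥ 4. Let T ⊂ P^n be a reducible rational normal curve and let S be a set of x points with S ⊂ T_reg (the smooth locus of T) and S spanning P^n. If 2x ≥ dn + 2, then S ∈ T(n,d;x). -/
open MvPolynomial

noncomputable section

/-- Projective `n`-space over `k`, as the projectivization of `k^(n+1)`. -/
abbrev ProjSpace (k : Type*) [Field k] (n : ℕ) := Projectivization k (Fin (n+1) → k)

variable (k : Type*) [Field k]

/-- Evaluation at a vector, as a linear map on polynomials. -/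
def evalLM {n : ℕ} (v : Fin n → k) : MvPolynomial (Fin n) k →ₗ[k] k :=
  (MvPolynomial.aeval v).toLinearMap

/-- The submodule of polynomials vanishing together with all first partial derivatives at `v`. -/
def doubleVanishing {n : ℕ} (v : Fin n → k) : Submodule k (MvPolynomial (Fin n) k) :=
  LinearMap.ker (evalLM k v) ⊓
    ⨅ i : Fin n, LinearMap.ker ((evalLM k v).comp (MvPolynomial.pderiv i).toLinearMap)

/-- `h^0(I_{2S}(d))`: dimension of degree-`d` forms vanishing doubly at all points of `S`. -/
def h0 (n d : ℕ) (S : Finset (ProjSpace k n)) : ℕ :=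
  Module.finrank k
    ↥(homogeneousSubmodule (Fin (n+1)) k d ⊓ ⨅ p ∈ S, doubleVanishing k p.rep)

/-- `h^1(I_{2S}(d)) = h^0(I_{2S}(d)) + (n+1)#S - C(n+d,n)`. -/
def h1 (n d : ℕ) (S : Finset (ProjSpace k n)) : ℤ :=
  (h0 k n d S : ℤ) + (n+1) * S.card - (n+d).choose n

/-- `S` spans `P^n`: it is contained in no hyperplane. -/
def Spans (n : ℕ) (S : Finset (ProjSpace k n)) : Prop :=
  Submodule.span k (Projectivization.rep '' (S : Set (ProjSpace k n))) = ⊤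

/-- The Terracini locus `T(n,d;x)`. -/
def Terracini (n d x : ℕ) : Set (Finset (ProjSpace k n)) :=
  {S | S.card = x ∧ Spans k n S ∧ 0 < h0 k n d S ∧ 0 < h1 k n d S}

/-- The minimally Terracini locus `T(n,d;x)'`. -/
def minTerracini (n d x : ℕ) : Set (Finset (ProjSpace k n)) :=
  {S | S ∈ Terracini k n d x ∧ ∀ A : Finset (ProjSpace k n), A ⊂ S → h1 k n d A = 0}

end
/-- The `i`-th coordinate `s^(n-i) t^i` of the standard rational normal curve of degree `n`. -/
def stdRNCvec (k : Type*) [Field k] (n : ℕ) (s t : k) : Fin (n+1) → k :=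
  fun i => s ^ (n - (i : ℕ)) * t ^ (i : ℕ)

/-- The standard rational normal curve in `P^n`: the image of
`[s:t] ↦ [s^n : s^(n-1)t : ⋯ : t^n]`. -/
def stdRNC (k : Type*) [Field k] (n : ℕ) : Set (ProjSpace k n) :=
  {p | ∃ s t : k, (s ≠ 0 ∨ t ≠ 0) ∧
    Projectivization.submodule p = Submodule.span k {stdRNCvec k n s t}}

/-- A rational normal curve in `P^n`: a curve projectively equivalent to the standard one. -/
def IsRNC (k : Type*) [Field k] (n : ℕ) (C : Set (ProjSpace k n)) : Prop :=
  ∃ g : (Fin (n+1) → k) ≃ₗ[k] (Fin (n+1) → k),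
    C = {p | ∃ s t : k, (s ≠ 0 ∨ t ≠ 0) ∧
      Projectivization.submodule p = Submodule.span k {g (stdRNCvec k n s t)}}

/-- Data for a reducible rational normal curve in `P^n`: a union of `s ≥ 2` irreducible
components, the `i`-th being a rational normal curve of degree `deg i` embedded in its
linear span via an injective linear map `emb i`. -/
structure RedRNC (k : Type*) [Field k] (n : ℕ) where
  s : ℕ
  two_le_s : 2 ≤ s
  deg : Fin s → ℕ
  deg_pos : ∀ i, 0 < deg i
  sum_deg : ∑ i, deg i = n
  emb : ∀ i, (Fin (deg i + 1) → k) →ₗ[k] (Fin (n+1) → k)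
  emb_inj : ∀ i, Function.Injective (emb i)

namespace RedRNC

variable {k : Type*} [Field k] {n : ℕ}

/-- The `i`-th irreducible component: a rational normal curve in its linear span. -/
def comp (T : RedRNC k n) (i : Fin T.s) : Set (ProjSpace k n) :=
  Projectivization.map (T.emb i) (T.emb_inj i) '' stdRNC k (T.deg i)

/-- The underlying reduced curve: the union of the components. -/
def curve (T : RedRNC k n) : Set (ProjSpace k n) := ⋃ i, T.comp i

/-- `T` is a genuine reducible rational normal curve: the components are pairwise distinct
(the curve is reduced and reducible of degree `n`), the curve is connected, and it spans
`P^n`. -/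
def IsGood (T : RedRNC k n) : Prop :=
  (∀ i j, i ≠ j → T.comp i ≠ T.comp j) ∧
  (∀ I : Finset (Fin T.s), I.Nonempty → I ≠ Finset.univ →
    ∃ i ∈ I, ∃ j ∉ I, (T.comp i ∩ T.comp j).Nonempty) ∧
  Submodule.span k (Projectivization.rep '' T.curve) = ⊤

/-- The singular locus of the curve: the points lying on at least two components. -/
def sing (T : RedRNC k n) : Set (ProjSpace k n) :=
  {p | ∃ i j, i ≠ j ∧ p ∈ T.comp i ∧ p ∈ T.comp j}

/-- The smooth locus of the curve. -/
def reg (T : RedRNC k n) : Set (ProjSpace k n) := T.curve \ T.sing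

/-- A final component: an irreducible component containing exactly one singular point. -/
def Final (T : RedRNC k n) (i : Fin T.s) : Prop :=
  (T.comp i ∩ T.sing).ncard = 1

end RedRNC

section Helpers

variable {k : Type*} [Field k]

theorem finrank_le_inf_ker_add {V V' : Type*} [AddCommGroup V] [Module k V]
    [AddCommGroup V'] [Module k V'] (U : Submodule k V) [FiniteDimensional k U]
    (f : V →ₗ[k] V') (P : Submodule k V') [FiniteDimensional k P]
    (h : ∀ u ∈ U, f u ∈ P) :
    Module.finrank k U ≤ Module.finrank k ↥(U ⊓ LinearMap.ker f) + Module.finrank k P := by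
  let g : U →ₗ[k] P := LinearMap.codRestrict P (f.domRestrict U) (fun u => h u u.2)
  have h1 := LinearMap.finrank_range_add_finrank_ker g
  have h2 : Module.finrank k (LinearMap.range g) ≤ Module.finrank k P := Submodule.finrank_le _
  have h3 : Submodule.map U.subtype (LinearMap.ker g) = U ⊓ LinearMap.ker f := by
    ext v
    simp only [Submodule.mem_map, LinearMap.mem_ker, Submodule.mem_inf, g]
    constructor
    · rintro ⟨u, hu, rfl⟩
      refine ⟨u.2, ?_⟩
      exact congrArg Subtype.val hu
    · rintro ⟨hv, hf⟩
      exact ⟨⟨v, hv⟩, Subtype.ext hf, rfl⟩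
  have h4 : Module.finrank k ↥(U ⊓ LinearMap.ker f) = Module.finrank k (LinearMap.ker g) := by
    rw [← h3]
    exact (Submodule.equivMapOfInjective U.subtype U.injective_subtype _).finrank_eq.symm
  omega

instance homog_fd (m d : ℕ) :
    FiniteDimensional k ↥(homogeneousSubmodule (Fin m) k d) :=
  Module.Finite.iff_fg.mpr (homogeneousSubmodule_fg (Fin m) k d)

theorem finrank_homog (n d : ℕ) :
    Module.finrank k ↥(homogeneousSubmodule (Fin (n+1)) k d) = (n+d).choose n := by
  rw [homogeneousSubmodule_eq_finsupp_supported]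
  have e := AddMonoidAlgebra.supportedEquivFinsupp (S := k) (R := k)
    {f : Fin (n+1) →₀ ℕ | f.degree = d}
  have hs : {f : Fin (n+1) →₀ ℕ | f.degree = d} = 
     ↑((Finset.univ : Finset (Fin (n+1))).finsuppAntidiag d) := by
    ext f
    simp [Finset.mem_finsuppAntidiag, Finsupp.degree_eq_sum]
  have := Finset.card_finsuppAntidiag_nat_eq_choose (s := (Finset.univ : Finset (Fin (n+1)))) d
  rw [hs] at e ⊢
  refine (LinearEquiv.finrank_eq e).trans ?_
  rw [Module.finrank_finsupp_self]
  simp only [Finset.coe_sort_coe, Fintype.card_coe]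
  rw [this, Finset.card_univ, Fintype.card_fin, Nat.choose_symm_add]
  congr 1
  omega

/-- chain rule -/
theorem pderiv_aeval_chain {m r : ℕ} (g : Fin m → MvPolynomial (Fin r) k)
    (F : MvPolynomial (Fin m) k) (a : Fin r) :
    pderiv a (aeval g F) = ∑ j, aeval g (pderiv j F) * pderiv a (g j) := by
  induction F using MvPolynomial.induction_on with
  | C c => simp [algebraMap_eq]
  | add p q hp hq => simp only [map_add, hp, hq, add_mul, Finset.sum_add_distrib]
  | mul_X p i hp =>
    simp only [map_mul, aeval_X, Derivation.leibniz, smul_eq_mul, hp, map_add, pderiv_X, add_mul,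
      Finset.sum_add_distrib, Finset.mul_sum]
    congr 1
    · rw [Finset.sum_eq_single i]
      · simp
      · intro b _ hb
        simp [Pi.single_apply, hb.symm]
      · simp
    · refine Finset.sum_congr rfl fun j _ => by ring

/-- polynomial parametrisation of the standard RNC -/
noncomputable def parPoly (k : Type*) [Field k] (m : ℕ) (l : Fin (m+1)) : MvPolynomial (Fin 2) k :=
  X 0 ^ (m - (l : ℕ)) * X 1 ^ (l : ℕ)

theorem parPoly_homog (m : ℕ) (l : Fin (m+1)) : (parPoly k m l).IsHomogeneous m := by
  have := (isHomogeneous_X_pow (R := k) (0 : Fin 2) (m - (l:ℕ))).mul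
    (isHomogeneous_X_pow (R := k) (1 : Fin 2) (l:ℕ))
  have e : m - (l:ℕ) + l = m := by have := l.2; omega
  rwa [e] at this

/-- polynomial parametrisation of an embedded RNC -/
noncomputable def embPoly {n m : ℕ} (E : (Fin (m+1) → k) →ₗ[k] (Fin (n+1) → k)) (j : Fin (n+1)) :
    MvPolynomial (Fin 2) k :=
  ∑ l, C (E (Pi.single l 1) j) * parPoly k m l

theorem embPoly_homog {n m : ℕ} (E : (Fin (m+1) → k) →ₗ[k] (Fin (n+1) → k)) (j : Fin (n+1)) :
    (embPoly E j).IsHomogeneous m :=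
  IsHomogeneous.sum _ _ _ fun l _ => (parPoly_homog m l).C_mul _

theorem lin_expand {n m : ℕ} (E : (Fin (m+1) → k) →ₗ[k] (Fin (n+1) → k)) (v : Fin (m+1) → k)
    (j : Fin (n+1)) : E v j = ∑ l, E (Pi.single l 1) j * v l := by
  conv_lhs => rw [LinearMap.pi_apply_eq_sum_univ E v]
  simp [mul_comm]
  refine Finset.sum_congr rfl fun l _ => ?_
  have : (fun j => if l = j then (1 : k) else 0) = Pi.single l 1 := by
    ext i
    simp [Pi.single_apply, eq_comm]
  rw [this]

theorem eval_embPoly {n m : ℕ} (E : (Fin (m+1) → k) →ₗ[k] (Fin (n+1) → k)) (j : Fin (n+1))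
    (s t : k) : aeval ![s,t] (embPoly E j) = E (stdRNCvec k m s t) j := by
  rw [lin_expand]
  simp [embPoly, parPoly, stdRNCvec]

/-- derivative vectors -/
noncomputable def dvec (k : Type*) [Field k] (m : ℕ) (a : Fin 2) (s t : k) : Fin (m+1) → k :=
  fun l => aeval ![s,t] (pderiv a (parPoly k m l))

theorem eval_pderiv_embPoly {n m : ℕ} (E : (Fin (m+1) → k) →ₗ[k] (Fin (n+1) → k)) (j : Fin (n+1))
    (a : Fin 2) (s t : k) : aeval ![s,t] (pderiv a (embPoly E j)) = E (dvec k m a s t) j := by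
  rw [lin_expand]
  simp [embPoly, dvec, Derivation.leibniz]

theorem dvec_indep [CharZero k] (m : ℕ) (hm : 0 < m) (s t : k) (h : s ≠ 0 ∨ t ≠ 0) :
    LinearIndependent k ![dvec k m 0 s t, dvec k m 1 s t] := by
  have hmk : (m : k) ≠ 0 := by exact_mod_cast hm.ne'
  have h0 : ∀ l : Fin (m+1), dvec k m 0 s t l = ((m - (l:ℕ) : ℕ) : k) * s ^ (m - (l:ℕ) - 1) * t ^ (l:ℕ) := by
    intro l
    simp [dvec, parPoly, Derivation.leibniz, pderiv_pow, pderiv_X]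
    ring
  have h1 : ∀ l : Fin (m+1), dvec k m 1 s t l = s ^ (m - (l:ℕ)) * ((l:ℕ) * t ^ ((l:ℕ)-1)) := by
    intro l
    simp [dvec, parPoly, Derivation.leibniz, pderiv_pow, pderiv_X]
  rw [LinearIndependent.pair_iff]
  intro α β hab
  have hc : ∀ l, α * dvec k m 0 s t l + β * dvec k m 1 s t l = 0 := fun l => by
    simpa using congrFun hab l
  rcases h with hs | ht
  · have e0 := hc ⟨0, by omega⟩
    have e1 := hc ⟨1, by omega⟩
    rw [h0, h1] at e0 e1
    have hα : α = 0 := by simpa [hmk, hs] using e0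
    subst hα
    simpa [hs] using e1
  · have e0 := hc ⟨m, by omega⟩
    have e1 := hc ⟨m-1, by omega⟩
    rw [h0, h1] at e0 e1
    have hβ : β = 0 := by simpa [hmk, ht] using e0
    subst hβ
    have : m - (m-1) = 1 := by omega
    simpa [ht, this] using e1

theorem dot_surj {N : ℕ} (u w : Fin N → k) (h : LinearIndependent k ![u, w]) (y : Fin 2 → k) :
    ∃ a : Fin N → k, ∀ b : Fin 2, ∑ j, a j * (![u,w] b) j = y b := by
  let M : Matrix (Fin 2) (Fin N) k := Matrix.of ![u,w]
  have hr : M.rank = 2 := by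
    have : LinearIndependent k M.row := h
    simpa using this.rank_matrix
  have hs : LinearMap.range M.mulVecLin = ⊤ := by
    apply Submodule.eq_top_of_finrank_eq
    rw [Module.finrank_fin_fun]
    exact hr
  obtain ⟨a, ha⟩ := LinearMap.range_eq_top.mp hs y
  refine ⟨a, fun b => ?_⟩
  rw [← ha]
  simp [Matrix.mulVec, dotProduct, M, mul_comm]

theorem rep_of_mem_comp [IsAlgClosed k] {n : ℕ} (T : RedRNC k n) (i : Fin T.s)
    (p : ProjSpace k n) (hp : p ∈ T.comp i) :
    ∃ s t : k, (s ≠ 0 ∨ t ≠ 0) ∧ p.rep = T.emb i (stdRNCvec k (T.deg i) s t) := by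
  obtain ⟨q, ⟨s, t, hst, hq⟩, rfl⟩ := hp
  have hm := T.deg_pos i
  have h1 : (Projectivization.map (T.emb i) (T.emb_inj i) q).rep ∈
      Submodule.span k {T.emb i (stdRNCvec k (T.deg i) s t)} := by
    have hx : q.rep ∈ Submodule.span k {stdRNCvec k (T.deg i) s t} := by
      rw [← hq, Projectivization.submodule_eq]
      exact Submodule.mem_span_singleton_self _
    obtain ⟨b, hb⟩ := Submodule.mem_span_singleton.mp hx
    have h2 : Projectivization.map (T.emb i) (T.emb_inj i) q =
        Projectivization.mk k (T.emb i q.rep)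
          (by simpa using (map_ne_zero_iff _ (T.emb_inj i)).mpr q.rep_nonzero) := by
      conv_lhs => rw [← q.mk_rep]
      rw [Projectivization.map_mk]
    have h3 : (Projectivization.map (T.emb i) (T.emb_inj i) q).rep ∈
        (Projectivization.map (T.emb i) (T.emb_inj i) q).submodule := by
      rw [Projectivization.submodule_eq]
      exact Submodule.mem_span_singleton_self _
    rw [h2, Projectivization.submodule_mk] at h3
    rw [← h2] at h3
    obtain ⟨c, hc⟩ := Submodule.mem_span_singleton.mp h3
    rw [← hc, ← hb, map_smul, smul_smul]
    exact Submodule.smul_mem _ _ (Submodule.mem_span_singleton_self _)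
  obtain ⟨c, hc⟩ := Submodule.mem_span_singleton.mp h1
  have hc0 : c ≠ 0 := by
    rintro rfl
    rw [zero_smul] at hc
    exact Projectivization.rep_nonzero _ hc.symm
  obtain ⟨z, hz⟩ := IsAlgClosed.exists_pow_nat_eq c hm
  have hz0 : z ≠ 0 := by
    rintro rfl
    rw [zero_pow hm.ne'] at hz
    exact hc0 hz.symm
  refine ⟨z * s, z * t, by simpa [hz0] using hst, ?_⟩
  rw [← hc, ← map_smul]
  congr 1
  ext l
  have e : z ^ T.deg i = z ^ (T.deg i - (l:ℕ)) * z ^ (l:ℕ) := by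
    rw [← pow_add]
    congr 1
    have := l.2
    omega
  simp only [stdRNCvec, Pi.smul_apply, smul_eq_mul, mul_pow]
  rw [← hz, e]
  ring

/-- restriction map to the `i`-th component -/
noncomputable def res {n : ℕ} (T : RedRNC k n) (i : Fin T.s) :
    MvPolynomial (Fin (n+1)) k →ₐ[k] MvPolynomial (Fin 2) k :=
  aeval (fun j => embPoly (T.emb i) j)

theorem res_homog {n : ℕ} (T : RedRNC k n) (i : Fin T.s) {d : ℕ} {F} (hF : F.IsHomogeneous d) :
    (res T i F).IsHomogeneous (T.deg i * d) :=
  hF.aeval _ fun j => embPoly_homog (T.emb i) j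

theorem eval_res {n : ℕ} (T : RedRNC k n) (i : Fin T.s) (F) (s t : k) :
    aeval ![s,t] (res T i F) = aeval (T.emb i (stdRNCvec k (T.deg i) s t)) F := by
  rw [res, ← AlgHom.comp_apply, comp_aeval]
  simp only [eval_embPoly]

/-- forms of degree `d` vanishing on the components in `I` -/
noncomputable def KI {n : ℕ} (T : RedRNC k n) (d : ℕ) (I : Finset (Fin T.s)) :
    Submodule k (MvPolynomial (Fin (n+1)) k) :=
  homogeneousSubmodule (Fin (n+1)) k d ⊓ ⨅ i ∈ I, LinearMap.ker (res T i).toLinearMap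

theorem mem_KI {n : ℕ} (T : RedRNC k n) (d : ℕ) (I : Finset (Fin T.s)) (F) :
    F ∈ KI T d I ↔ F.IsHomogeneous d ∧ ∀ i ∈ I, res T i F = 0 := by
  simp [KI]

instance KI_fd {n : ℕ} (T : RedRNC k n) (d : ℕ) (I : Finset (Fin T.s)) :
    FiniteDimensional k (KI T d I) :=
  Submodule.finiteDimensional_of_le (inf_le_left)

theorem KI_insert {n : ℕ} (T : RedRNC k n) (d : ℕ) (I : Finset (Fin T.s)) (j : Fin T.s) :
    KI T d (insert j I) = KI T d I ⊓ LinearMap.ker (res T j).toLinearMap := by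
  ext F
  simp only [Submodule.mem_inf, mem_KI, Finset.mem_insert, LinearMap.mem_ker,
    AlgHom.toLinearMap_apply]
  constructor
  · rintro ⟨h, h'⟩
    exact ⟨⟨h, fun i hi => h' i (Or.inr hi)⟩, h' j (Or.inl rfl)⟩
  · rintro ⟨⟨h, h'⟩, h''⟩
    exact ⟨h, by rintro i (rfl | hi); exacts [h'', h' i hi]⟩

/-- binary forms of degree `N` vanishing at a nonzero vector -/
theorem finrank_binary_vanish (N : ℕ) (s t : k) (h : s ≠ 0 ∨ t ≠ 0) :
    Module.finrank k ↥(homogeneousSubmodule (Fin 2) k N ⊓ LinearMap.ker (evalLM k ![s,t])) ≤ N := by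
  have h1 := finrank_homog (k := k) 1 N
  rw [Nat.choose_one_right] at h1
  have : homogeneousSubmodule (Fin 2) k N ⊓ LinearMap.ker (evalLM k ![s,t]) <
      homogeneousSubmodule (Fin 2) k N := by
    refine lt_of_le_of_ne inf_le_left fun he => ?_
    rw [inf_eq_left] at he
    rcases h with h | h
    · have := he (isHomogeneous_X_pow (0 : Fin 2) N)
      simp [evalLM, h] at this
    · have := he (isHomogeneous_X_pow (1 : Fin 2) N)
      simp [evalLM, h] at this
  have := Submodule.finrank_lt_finrank_of_lt this
  simp only [Nat.reduceAdd] at h1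
  omega

theorem codim_step [IsAlgClosed k] {n : ℕ} (T : RedRNC k n) (d : ℕ) (I : Finset (Fin T.s))
    (i j : Fin T.s) (hi : i ∈ I) (hij : (T.comp i ∩ T.comp j).Nonempty) :
    Module.finrank k (KI T d I) ≤ Module.finrank k (KI T d (insert j I)) + d * T.deg j := by
  obtain ⟨p, hpi, hpj⟩ := hij
  obtain ⟨s, t, hst, h1⟩ := rep_of_mem_comp T i p hpi
  obtain ⟨s', t', hst', h2⟩ := rep_of_mem_comp T j p hpj
  let P := homogeneousSubmodule (Fin 2) k (T.deg j * d) ⊓ LinearMap.ker (evalLM k ![s',t'])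
  haveI : FiniteDimensional k P := Submodule.finiteDimensional_of_le (inf_le_left)
  have := finrank_le_inf_ker_add (KI T d I) (res T j).toLinearMap P (by
    intro F hF
    rw [mem_KI] at hF
    refine ⟨res_homog T j hF.1, ?_⟩
    have e1 := eval_res T j F s' t'
    have e2 := eval_res T i F s t
    rw [hF.2 i hi, map_zero, ← h1] at e2
    rw [← h2, ← e2] at e1
    exact e1)
  rw [KI_insert]
  have h3 := finrank_binary_vanish (T.deg j * d) s' t' hst'
  rw [mul_comm d]
  exact this.trans (Nat.add_le_add_left h3 _)

theorem codim_chain [IsAlgClosed k] {n : ℕ} (T : RedRNC k n) (hT : T.IsGood) (d : ℕ) (m : ℕ)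
    (hm : m + 1 ≤ T.s) : ∃ I : Finset (Fin T.s), I.card = m + 1 ∧
      (n+d).choose n ≤ Module.finrank k (KI T d I) + (d * ∑ i ∈ I, T.deg i + 1) := by
  induction m with
  | zero =>
    refine ⟨{⟨0, by omega⟩}, by simp, ?_⟩
    have h0 : KI T d ∅ = homogeneousSubmodule (Fin (n+1)) k d := by simp [KI]
    have h1 := finrank_homog (k := k) n d
    have h2 := finrank_homog (k := k) 1 (T.deg ⟨0, by omega⟩ * d)
    have := finrank_le_inf_ker_add (KI T d ∅) (res T ⟨0, by omega⟩).toLinearMap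
      (homogeneousSubmodule (Fin (1+1)) k (T.deg ⟨0, by omega⟩ * d)) (by
        intro F hF
        exact res_homog T _ ((mem_KI _ _ _ _).mp hF).1)
    rw [← KI_insert, h2, Nat.choose_one_right, h0, h1] at this
    simp only [Finset.sum_singleton]
    rw [mul_comm d, add_comm (T.deg _ * d) 1]
    exact this
  | succ m ih =>
    obtain ⟨I, hI, hle⟩ := ih (by omega)
    obtain ⟨i, hi, j, hj, hij⟩ := hT.2.1 I (Finset.card_pos.mp (by omega)) (by
      rintro rfl
      rw [Finset.card_univ, Fintype.card_fin] at hI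
      omega)
    refine ⟨insert j I, by rw [Finset.card_insert_of_notMem hj, hI], ?_⟩
    have := codim_step T d I i j hi hij
    rw [Finset.sum_insert hj, mul_add]
    omega

theorem codim_KI [IsAlgClosed k] {n : ℕ} (T : RedRNC k n) (hT : T.IsGood) (d : ℕ) :
    (n+d).choose n ≤ Module.finrank k (KI T d Finset.univ) + (d * n + 1) := by
  obtain ⟨I, hI, h⟩ := codim_chain T hT d (T.s - 1) (by have := T.two_le_s; omega)
  have : I = Finset.univ := by
    rw [← Finset.card_eq_iff_eq_univ, hI, Fintype.card_fin]
    have := T.two_le_s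
    omega
  rw [this, T.sum_deg] at h
  exact h

theorem mem_doubleVanishing {N : ℕ} (v : Fin N → k) (F) :
    F ∈ doubleVanishing k v ↔ aeval v F = 0 ∧ ∀ i, aeval v (pderiv i F) = 0 := by
  simp [doubleVanishing, evalLM]

theorem h0_pos [IsAlgClosed k] {n d : ℕ} (hn : 2 ≤ n) (hd : 4 ≤ d) (T : RedRNC k n)
    (hT : T.IsGood) (S : Finset (ProjSpace k n)) (hS : (S : Set (ProjSpace k n)) ⊆ T.curve) :
    0 < h0 k n d S := by
  have hq := codim_KI T hT 2
  have hpos : 0 < Module.finrank k (KI T 2 Finset.univ) := by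
    have h2 : (n+2).choose n * 2 = (n+2) * (n+1) := by
      rw [Nat.choose_symm_add, Nat.choose_two_right]
      have : 2 ∣ (n+2) * (n+1) := by
        rw [mul_comm]; exact (Nat.even_mul_succ_self (n+1)).two_dvd
      exact Nat.div_mul_cancel this
    by_contra hcon
    have : Module.finrank k (KI T 2 Finset.univ) = 0 := by omega
    rw [this] at hq
    nlinarith
  obtain ⟨⟨Q, hQ⟩, hQ0⟩ := (Module.finrank_pos_iff_exists_ne_zero).mp hpos
  have hQ0 : Q ≠ 0 := fun h => hQ0 (Subtype.ext h)
  rw [mem_KI] at hQ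
  let W := homogeneousSubmodule (Fin (n+1)) k d ⊓ ⨅ p ∈ S, doubleVanishing k p.rep
  haveI : FiniteDimensional k W := Submodule.finiteDimensional_of_le (inf_le_left)
  change 0 < Module.finrank k W
  refine (Module.finrank_pos_iff_exists_ne_zero).mpr ⟨⟨Q ^ 2 * X 0 ^ (d - 4), ?_, ?_⟩, ?_⟩
  · have := (hQ.1.pow 2).mul (isHomogeneous_X_pow (R := k) (0 : Fin (n+1)) (d-4))
    have e : 2 * 2 + (d - 4) = d := by omega
    rwa [e] at this
  · simp only [Submodule.mem_iInf, SetLike.mem_coe]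
    intro p hp
    obtain ⟨i, hi⟩ := Set.mem_iUnion.mp (hS hp)
    obtain ⟨s, t, hst, h1⟩ := rep_of_mem_comp T i p hi
    have hv : eval p.rep Q = 0 := by
      rw [← coe_aeval_eq_eval]
      change aeval p.rep Q = 0
      rw [h1, ← eval_res, hQ.2 i (Finset.mem_univ _), map_zero]
    rw [mem_doubleVanishing]
    refine ⟨by simp [hv], fun a => ?_⟩
    simp [Derivation.leibniz, pderiv_pow, hv]
  · intro h
    have := congrArg Subtype.val h
    simp only [ZeroMemClass.coe_zero, mul_eq_zero] at this
    rcases this with h | h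
    · exact hQ0 (pow_eq_zero_iff (two_ne_zero) |>.mp h)
    · exact pow_ne_zero _ (X_ne_zero _) h

theorem h1_pos [IsAlgClosed k] [CharZero k] {n d : ℕ} (hd : 4 ≤ d) (T : RedRNC k n)
    (hT : T.IsGood) (S : Finset (ProjSpace k n)) (hS : (S : Set (ProjSpace k n)) ⊆ T.curve)
    (hx : d * n + 2 ≤ 2 * S.card) :
    0 < h1 k n d S := by
  classical
  have hpt : ∀ p : S, ∃ (i : Fin T.s) (s t : k), (s ≠ 0 ∨ t ≠ 0) ∧
      p.1.rep = T.emb i (stdRNCvec k (T.deg i) s t) := by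
    intro p
    obtain ⟨i, hi⟩ := Set.mem_iUnion.mp (hS p.2)
    obtain ⟨s, t, h⟩ := rep_of_mem_comp T i p hi
    exact ⟨i, s, t, h⟩
  choose ι s t hst hrep using hpt
  let W := homogeneousSubmodule (Fin (n+1)) k d
  let φ : MvPolynomial (Fin (n+1)) k →ₗ[k] (S → Fin (n+1) → k) :=
    LinearMap.pi fun p => LinearMap.pi fun j => (evalLM k p.1.rep).comp (pderiv j).toLinearMap
  have hφ : ∀ F p j, φ F p j = aeval p.1.rep (pderiv j F) := fun F p j => rfl
  let u : S → Fin 2 → Fin (n+1) → k := fun p =>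
    ![T.emb (ι p) (dvec k _ 0 (s p) (t p)), T.emb (ι p) (dvec k _ 1 (s p) (t p))]
  have hu : ∀ p b, u p b = T.emb (ι p) (dvec k _ b (s p) (t p)) := by
    intro p b
    fin_cases b <;> rfl
  let ψ : (S → Fin (n+1) → k) →ₗ[k] (S → Fin 2 → k) :=
    LinearMap.pi fun p => LinearMap.pi fun b =>
      ∑ j, (u p b j) • ((LinearMap.proj j : (Fin (n+1) → k) →ₗ[k] k) ∘ₗ
        (LinearMap.proj p : (S → Fin (n+1) → k) →ₗ[k] (Fin (n+1) → k)))
  have hψ : ∀ a p b, ψ a p b = ∑ j, a p j * u p b j := by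
    intro a p b
    simp [ψ, mul_comm]
  have hψs : Function.Surjective ψ := by
    intro y
    have : ∀ p, ∃ a : Fin (n+1) → k, ∀ b : Fin 2, ∑ j, a j * (u p b) j = y p b := fun p => by
      refine dot_surj _ _ ?_ (y p)
      have := (dvec_indep (k := k) _ (T.deg_pos (ι p)) _ _ (hst p)).map' (T.emb (ι p))
        (LinearMap.ker_eq_bot.mpr (T.emb_inj _))
      have hfun : (T.emb (ι p)) ∘ ![dvec k _ 0 (s p) (t p), dvec k _ 1 (s p) (t p)] =
          ![T.emb (ι p) (dvec k _ 0 (s p) (t p)), T.emb (ι p) (dvec k _ 1 (s p) (t p))] := by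
        funext b
        fin_cases b <;> rfl
      rw [hfun] at this
      exact this
    choose a ha using this
    exact ⟨a, by ext p b; rw [hψ, ha]⟩
  -- `ψ ∘ φ` kills the forms vanishing on `T`
  have hkill : ∀ F ∈ KI T d Finset.univ, ψ (φ F) = 0 := by
    intro F hF
    rw [mem_KI] at hF
    ext p b
    rw [hψ]
    have e := pderiv_aeval_chain (fun j => embPoly (T.emb (ι p)) j) F b
    have e0 : aeval (fun j => embPoly (T.emb (ι p)) j) F = 0 := hF.2 (ι p) (Finset.mem_univ _)
    rw [e0, map_zero] at e
    have e' := congrArg (aeval ![s p, t p]) e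
    rw [map_zero, map_sum] at e'
    rw [Pi.zero_apply, Pi.zero_apply, e']
    refine Finset.sum_congr rfl fun j _ => ?_
    rw [map_mul, eval_pderiv_embPoly, hφ, hrep, hu, ← eval_res]
    rfl
  have hV : W ⊓ LinearMap.ker φ ≤
      homogeneousSubmodule (Fin (n+1)) k d ⊓ ⨅ p ∈ S, doubleVanishing k p.rep := by
    rintro F ⟨hF, hF'⟩
    refine ⟨hF, ?_⟩
    simp only [Submodule.mem_iInf, SetLike.mem_coe]
    intro p hp
    have hz : ∀ j, aeval p.rep (pderiv j F) = 0 := fun j =>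
      congrFun (congrFun hF' ⟨p, hp⟩) j
    rw [mem_doubleVanishing]
    refine ⟨?_, hz⟩
    have he := congrArg (aeval p.rep) (IsHomogeneous.sum_X_mul_pderiv hF)
    simp only [map_sum, map_mul, hz, mul_zero, Finset.sum_const_zero, map_nsmul] at he
    rcases smul_eq_zero.mp he.symm with h | h
    · omega
    · exact h
  haveI : FiniteDimensional k
      ↥(homogeneousSubmodule (Fin (n+1)) k d ⊓ ⨅ p ∈ S, doubleVanishing k p.rep) :=
    Submodule.finiteDimensional_of_le (inf_le_left)
  have hV' := Submodule.finrank_mono hV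
  -- the image of `φ` on `W` is a proper subspace
  let R := W.map φ
  have hR : R ≠ ⊤ := by
    intro hR
    have hmap : W.map (ψ ∘ₗ φ) = ⊤ := by
      rw [Submodule.map_comp]
      change R.map ψ = ⊤
      rw [hR, Submodule.map_top, LinearMap.range_eq_top.mpr hψs]
    let g := (ψ ∘ₗ φ).domRestrict W
    have hg : LinearMap.range g = ⊤ := by
      rw [LinearMap.range_domRestrict, hmap]
    have r1 := LinearMap.finrank_range_add_finrank_ker g
    have r2 : Module.finrank k (LinearMap.range g) = S.card * 2 := by
      rw [hg, finrank_top, Module.finrank_pi_fintype]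
      simp
    have r3 : Module.finrank k (KI T d Finset.univ) ≤ Module.finrank k (LinearMap.ker g) := by
      let f : KI T d Finset.univ →ₗ[k] LinearMap.ker g :=
        LinearMap.codRestrict _ (Submodule.inclusion (inf_le_left)) (fun F => hkill F.1 F.2)
      refine LinearMap.finrank_le_finrank_of_injective (f := f) ?_
      intro a b hab
      have := congrArg (fun z => (z.1.1 : MvPolynomial (Fin (n+1)) k)) hab
      exact Subtype.ext this
    have r4 := finrank_homog (k := k) n d
    have r5 := codim_KI T hT d
    change _ = Module.finrank k ↥(homogeneousSubmodule (Fin (n+1)) k d) at r1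
    omega
  have q1 := finrank_le_inf_ker_add W φ R (fun F hF => Submodule.mem_map_of_mem hF)
  have q2 := Submodule.finrank_lt hR
  have q3 : Module.finrank k (S → Fin (n+1) → k) = S.card * (n+1) := by
    rw [Module.finrank_pi_fintype]
    simp
  have q4 : Module.finrank k W = (n+d).choose n := finrank_homog n d
  have q5 : (n+d).choose n < h0 k n d S + S.card * (n+1) := by
    unfold h0
    omega
  unfold h1
  have : ((n+d).choose n : ℤ) < h0 k n d S + S.card * (n+1) := by exact_mod_cast q5
  linarith

end Helpers

/-- Lemma: for `n ≥ 2`, `d ≥ 4`, a set `S` of `x` points contained in the smooth locus of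
a reducible rational normal curve of `P^n`, spanning `P^n` and with `2x ≥ dn + 2`,
belongs to `T(n,d;x)`. -/
theorem redRNC_points_terracini
    (k : Type*) [Field k] [IsAlgClosed k] [CharZero k]
    (n d x : ℕ) (hn : 2 ≤ n) (hd : 4 ≤ d)
    (T : RedRNC k n) (hT : T.IsGood)
    (S : Finset (ProjSpace k n)) (hcard : S.card = x)
    (hreg : ↑S ⊆ T.reg) (hspan : Spans k n S)
    (hx : d * n + 2 ≤ 2 * x) :
    S ∈ Terracini k n d x := by
  exact ⟨hcard, hspan, h0_pos hn hd T hT S (fun p hp => (hreg hp).1),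
    h1_pos hd T hT S (fun p hp => (hreg hp).1) (by rw [hcard]; exact hx)⟩
end

section
/- Let d ≥ 7 be an odd integer and set x := (3d+1)/2. Let C ⊂ P^2 be a smooth plane cubic curve and let S ⊂ C be any set of x points on C. Then S ∈ T(2,d;x)'; in particular T(2,d;(3d+1)/2)' ≠ ∅ for every odd d ≥ 7. -/
open MvPolynomial

/-- The zero locus in `P^n` of a (homogeneous) polynomial `q`. -/
def projZeroLocus (k : Type*) [Field k] (n : ℕ) (q : MvPolynomial (Fin (n+1)) k) :
    Set (ProjSpace k n) :=
  {p | MvPolynomial.eval (Projectivization.rep p) q = 0}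

/-- `q` defines a smooth plane curve of degree `e` in `P^2`: `q` is a nonzero homogeneous
form of degree `e` and at no point of its zero locus do all partial derivatives vanish. -/
def IsSmoothPlaneCurve (k : Type*) [Field k] (e : ℕ) (q : MvPolynomial (Fin 3) k) : Prop :=
  q ≠ 0 ∧ q ∈ MvPolynomial.homogeneousSubmodule (Fin 3) k e ∧
    ∀ v : Fin 3 → k, v ≠ 0 → MvPolynomial.eval v q = 0 →
      ∃ i, MvPolynomial.eval v (MvPolynomial.pderiv i q) ≠ 0


namespace SmoothCubic

variable {k : Type*} [Field k]

/-- Gradient of `F` at `v`. -/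
noncomputable def grad (F : MvPolynomial (Fin 3) k) (v : Fin 3 → k) : Fin 3 → k :=
  fun i => eval v (pderiv i F)

/-- Linear form with coefficient vector `l`. -/
noncomputable def lin (l : Fin 3 → k) : MvPolynomial (Fin 3) k := ∑ i, C (l i) * X i

/-- Restriction of `F` to the affine line `p + T q`. -/
noncomputable def ln (p q : Fin 3 → k) (F : MvPolynomial (Fin 3) k) : Polynomial k :=
  aeval (fun i => Polynomial.C (p i) + Polynomial.C (q i) * Polynomial.X) F

lemma eval_lin (l v : Fin 3 → k) : eval v (lin l) = l ⬝ᵥ v := by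
  simp [lin, dotProduct]

lemma grad_lin (l v : Fin 3 → k) : grad (lin l) v = l := by
  funext i
  fin_cases i <;> simp [grad, lin, Fin.sum_univ_three, pderiv_X]

lemma lin_homog (l : Fin 3 → k) : (lin l).IsHomogeneous 1 := by
  apply IsHomogeneous.sum
  intro i _
  exact isHomogeneous_C_mul_X _ _

lemma lin_ne_zero {l : Fin 3 → k} (hl : l ≠ 0) : lin l ≠ 0 := by
  intro h
  apply hl
  rw [← grad_lin l 0, h]
  funext i
  simp [grad]

lemma lin_add (l m : Fin 3 → k) : lin (l + m) = lin l + lin m := by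
  simp [lin, add_mul, Finset.sum_add_distrib]

lemma lin_smul (a : k) (m : Fin 3 → k) : lin (a • m) = C a * lin m := by
  simp [lin, Finset.mul_sum, mul_assoc]

lemma grad_mul (F G : MvPolynomial (Fin 3) k) (v : Fin 3 → k) :
    grad (F * G) v = eval v F • grad G v + eval v G • grad F v := by
  funext i
  simp [grad, Derivation.leibniz]

lemma grad_add (F G : MvPolynomial (Fin 3) k) (v : Fin 3 → k) :
    grad (F + G) v = grad F v + grad G v := by
  funext i
  simp [grad]

lemma grad_sub (F G : MvPolynomial (Fin 3) k) (v : Fin 3 → k) :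
    grad (F - G) v = grad F v - grad G v := by
  funext i
  simp [grad]

lemma grad_C_mul (a : k) (F : MvPolynomial (Fin 3) k) (v : Fin 3 → k) :
    grad (C a * F) v = a • grad F v := by
  funext i
  simp [grad]

lemma eval_ln (p q : Fin 3 → k) (F : MvPolynomial (Fin 3) k) (t : k) :
    (ln p q F).eval t = eval (p + t • q) F := by
  unfold ln
  induction F using MvPolynomial.induction_on with
  | C a => simp
  | add f g hf hg => simp [hf, hg]
  | mul_X f i hf => simp [hf]; left; ring

lemma derivative_ln (p q : Fin 3 → k) (F : MvPolynomial (Fin 3) k) :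
    Polynomial.derivative (ln p q F) = ∑ i, Polynomial.C (q i) * ln p q (pderiv i F) := by
  unfold ln
  induction F using MvPolynomial.induction_on with
  | C a => simp
  | add f g hf hg => simp [hf, hg, mul_add, Finset.sum_add_distrib]
  | mul_X f i hf =>
    have h1 : ∀ j, pderiv j (f * X i) = f * (if j = i then 1 else 0) + pderiv j f * X i := by
      intro j
      rw [Derivation.leibniz, pderiv_X, Pi.single_apply]
      simp only [smul_eq_mul, eq_comm]
      ring
    simp only [h1, map_mul, map_add, aeval_X, Polynomial.derivative_mul, hf, mul_add,
      Finset.sum_add_distrib, Finset.sum_mul]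
    simp only [Polynomial.derivative_add, Polynomial.derivative_mul, Polynomial.derivative_C,
      Polynomial.derivative_X, zero_mul, zero_add, mul_one, apply_ite (aeval _), map_one, map_zero,
      mul_ite, mul_zero, Finset.sum_ite_eq', Finset.sum_ite_eq, Finset.mem_univ, if_true]
    simp only [mul_assoc]
    ring

lemma derivative_ln_eval (p q : Fin 3 → k) (F : MvPolynomial (Fin 3) k) (t : k) :
    (Polynomial.derivative (ln p q F)).eval t = grad F (p + t • q) ⬝ᵥ q := by
  rw [derivative_ln, Polynomial.eval_finsetSum]
  simp [eval_ln, grad, dotProduct, mul_comm]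

lemma ln_natDegree {d : ℕ} (p q : Fin 3 → k) {F : MvPolynomial (Fin 3) k}
    (hF : F.IsHomogeneous d) : (ln p q F).natDegree ≤ d := by
  have := MvPolynomial.aeval_natDegree_le (m := d) (n := 1) F hF.totalDegree_le
    (fun i => Polynomial.C (p i) + Polynomial.C (q i) * Polynomial.X) (fun i => by
      compute_degree)
  rw [mul_one] at this
  exact this

lemma eval_smul' {d : ℕ} {F : MvPolynomial (Fin 3) k} (hF : F.IsHomogeneous d) (a : k)
    (v : Fin 3 → k) : eval (a • v) F = a ^ d * eval v F := by
  rw [eval_eq, eval_eq, Finset.mul_sum]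
  apply Finset.sum_congr rfl
  intro m hm
  have h := hF.degree_eq_sum_deg_support hm
  have : m.degree = ∑ i ∈ m.support, m i := rfl
  simp only [Pi.smul_apply, smul_eq_mul, mul_pow, Finset.prod_mul_distrib]
  rw [Finset.prod_pow_eq_pow_sum, ← h]
  ring

lemma grad_smul {d : ℕ} {F : MvPolynomial (Fin 3) k} (hF : F.IsHomogeneous d) (a : k)
    (v : Fin 3 → k) : grad F (a • v) = a ^ (d-1) • grad F v := by
  funext i
  simp [grad, eval_smul' (hF.pderiv (i := i))]

lemma euler {d : ℕ} {F : MvPolynomial (Fin 3) k} (hF : F.IsHomogeneous d)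
    (v : Fin 3 → k) : grad F v ⬝ᵥ v = d * eval v F := by
  have := congrArg (eval v) hF.sum_X_mul_pderiv
  simp at this
  rw [← this]
  simp [grad, dotProduct, mul_comm]

lemma ln_reflect [Infinite k] {d : ℕ} (p q : Fin 3 → k) {F : MvPolynomial (Fin 3) k}
    (hF : F.IsHomogeneous d) : ln q p F = Polynomial.reflect d (ln p q F) := by
  apply Polynomial.eq_of_infinite_eval_eq
  apply Set.Infinite.mono (s := {x : k | x ≠ 0})
  · intro x hx
    simp only [Set.mem_ofPred_eq] at hx ⊢
    let u : Invertible (x⁻¹) := invertibleOfNonzero (inv_ne_zero hx)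
    have := Polynomial.eval₂_reflect_mul_pow (RingHom.id k) (x⁻¹) d (ln p q F) (ln_natDegree p q hF)
    simp only [invOf_eq_inv, inv_inv, Polynomial.eval₂_id, eval_ln] at this
    have h2 : q + x • p = x • (p + x⁻¹ • q) := by
      rw [smul_add, smul_smul, mul_inv_cancel₀ hx, one_smul, add_comm]
    rw [eval_ln, h2, eval_smul' hF, ← this, mul_comm, mul_assoc, ← mul_pow, inv_mul_cancel₀ hx, one_pow, mul_one]
  · exact Set.Finite.infinite_compl (Set.finite_singleton (0:k))

lemma ln_coeff_top [Infinite k] {d : ℕ} (p q : Fin 3 → k) {F : MvPolynomial (Fin 3) k}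
    (hF : F.IsHomogeneous d) : (ln p q F).coeff d = eval q F := by
  have h := ln_reflect p q hF
  have h2 : (ln q p F).coeff 0 = eval q F := by
    rw [Polynomial.coeff_zero_eq_eval_zero, eval_ln]; simp
  rw [← h2, h, Polynomial.coeff_reflect]
  simp

lemma ln_coeff_sub [Infinite k] {d : ℕ} (p q : Fin 3 → k) {F : MvPolynomial (Fin 3) k}
    (hF : F.IsHomogeneous (d+1)) : (ln p q F).coeff d = grad F q ⬝ᵥ p := by
  have h := ln_reflect p q hF
  have h2 : (ln q p F).coeff 1 = grad F q ⬝ᵥ p := by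
    have := derivative_ln_eval q p F 0
    rw [← Polynomial.coeff_zero_eq_eval_zero, Polynomial.coeff_derivative] at this
    simpa using this
  rw [← h2, h, Polynomial.coeff_reflect, Polynomial.revAt_le (by omega)]
  simp

lemma ln_coeff_one (p q : Fin 3 → k) (F : MvPolynomial (Fin 3) k) :
    (ln p q F).coeff 1 = grad F p ⬝ᵥ q := by
  have := derivative_ln_eval p q F 0
  rw [← Polynomial.coeff_zero_eq_eval_zero, Polynomial.coeff_derivative] at this
  simpa using this

lemma ln_coeff_zero (p q : Fin 3 → k) (F : MvPolynomial (Fin 3) k) :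
    (ln p q F).coeff 0 = eval p F := by
  rw [Polynomial.coeff_zero_eq_eval_zero, eval_ln]; simp

lemma exists_dot_one {l : Fin 3 → k} (hl : l ≠ 0) : ∃ w, l ⬝ᵥ w = 1 := by
  obtain ⟨i, hi⟩ := Function.ne_iff.mp hl
  refine ⟨Pi.single i (l i)⁻¹, ?_⟩
  simp only [dotProduct_single]
  exact mul_inv_cancel₀ hi

lemma lin_dvd_of_vanish [Infinite k] {l : Fin 3 → k} (hl : l ≠ 0) {H : MvPolynomial (Fin 3) k}
    (h : ∀ v, l ⬝ᵥ v = 0 → eval v H = 0) : lin l ∣ H := by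
  obtain ⟨w, hw⟩ := exists_dot_one hl
  let φ : MvPolynomial (Fin 3) k →ₐ[k] MvPolynomial (Fin 3) k :=
    aeval (fun i => X i - lin l * C (w i))
  have h0 : φ H = 0 := by
    apply MvPolynomial.funext
    intro v
    have : ∀ H, eval v (φ H) = eval (v - (l ⬝ᵥ v) • w) H := by
      intro H
      induction H using MvPolynomial.induction_on with
      | C a => simp [φ]
      | add f g hf hg => rw [map_add, map_add, map_add, hf, hg]
      | mul_X f i hf => rw [map_mul, map_mul, map_mul, hf]; simp [φ, eval_lin]
    rw [this, h]
    · simp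
    · simp [hw]
  have h1 : ∀ G : MvPolynomial (Fin 3) k, lin l ∣ G - φ G := by
    intro G
    simp only [φ]
    induction G using MvPolynomial.induction_on with
    | C a => simp
    | add f g hf hg => rw [map_add, add_sub_add_comm]; exact dvd_add hf hg
    | mul_X f i hf =>
      rw [map_mul, aeval_X]
      obtain ⟨g, hg⟩ := hf
      refine ⟨g * X i + aeval (fun i => X i - lin l * C (w i)) f * C (w i), ?_⟩
      linear_combination (X i) * hg
  have := h1 H
  rwa [h0, sub_zero] at this

lemma homog_quot {m n : ℕ} (hmn : m ≤ n) {A B : MvPolynomial (Fin 3) k} (hA : A.IsHomogeneous m)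
    (hAB : (A * B).IsHomogeneous n) : ∃ B', B'.IsHomogeneous (n - m) ∧ A * B = A * B' := by
  let _ : GradedAlgebra (homogeneousSubmodule (Fin 3) k) := MvPolynomial.gradedAlgebra
  have := DirectSum.coe_decompose_mul_of_left_mem_of_le
    (homogeneousSubmodule (Fin 3) k) (a := A) (b := B) (i := m) (n := n) hA hmn
  rw [DirectSum.decompose_of_mem_same _ hAB] at this
  exact ⟨_, (DirectSum.decompose (homogeneousSubmodule (Fin 3) k) B (n-m)).2, this⟩

lemma homog_quot_zero {m n : ℕ} (hmn : n < m) {A B : MvPolynomial (Fin 3) k}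
    (hA : A.IsHomogeneous m) (hAB : (A * B).IsHomogeneous n) : A * B = 0 := by
  let _ : GradedAlgebra (homogeneousSubmodule (Fin 3) k) := MvPolynomial.gradedAlgebra
  have := DirectSum.coe_decompose_mul_of_left_mem_of_not_le
    (homogeneousSubmodule (Fin 3) k) (a := A) (b := B) (i := m) (n := n) hA (by omega)
  rwa [DirectSum.decompose_of_mem_same _ hAB] at this

lemma lin_prime {l : Fin 3 → k} (hl : l ≠ 0) : Prime (lin l) := by
  rw [← UniqueFactorizationMonoid.irreducible_iff_prime]
  have ht := (lin_homog l).totalDegree (lin_ne_zero hl)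
  apply irreducible_of_totalDegree_eq_one ht
  intro x hx
  have : x ≠ 0 := by
    rintro rfl
    apply lin_ne_zero hl
    ext m
    simpa using hx m
  exact this.isUnit

end SmoothCubic

namespace SmoothCubic

open scoped Matrix

variable {k : Type*} [Field k]

lemma cross_span (p q s : Fin 3 → k) (i : Fin 3) :
    (p ⨯₃ q) i • s = (s ⨯₃ q) i • p + (p ⨯₃ s) i • q + ((p ⨯₃ q) ⬝ᵥ s) • Pi.single i 1 := by
  funext j
  fin_cases i <;> fin_cases j <;>
    simp [cross_apply, dotProduct, Fin.sum_univ_three, Pi.single_apply] <;> ring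

lemma cross_dual (p q w g : Fin 3 → k) :
    ((p ⨯₃ q) ⬝ᵥ w) • g = (g ⬝ᵥ p) • (q ⨯₃ w) + (g ⬝ᵥ q) • (w ⨯₃ p) + (g ⬝ᵥ w) • (p ⨯₃ q) := by
  funext j
  fin_cases j <;>
    simp [cross_apply, dotProduct, Fin.sum_univ_three] <;> ring

lemma exists_comb {p q s : Fin 3 → k} (h : p ⨯₃ q ≠ 0) (hs : (p ⨯₃ q) ⬝ᵥ s = 0) :
    ∃ a b : k, s = a • p + b • q := by
  obtain ⟨i, hi⟩ := Function.ne_iff.mp h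
  have := cross_span p q s i
  rw [hs, zero_smul, add_zero] at this
  have hi' : (p ⨯₃ q) i ≠ 0 := hi
  refine ⟨((p ⨯₃ q) i)⁻¹ * (s ⨯₃ q) i, ((p ⨯₃ q) i)⁻¹ * (p ⨯₃ s) i, ?_⟩
  rw [mul_smul, mul_smul, ← smul_add, ← this, smul_smul, inv_mul_cancel₀ hi', one_smul]

lemma exists_prop {p q g : Fin 3 → k} (h : p ⨯₃ q ≠ 0) (h1 : g ⬝ᵥ p = 0) (h2 : g ⬝ᵥ q = 0) :
    ∃ a : k, g = a • (p ⨯₃ q) := by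
  obtain ⟨w, hw⟩ := exists_dot_one h
  have := cross_dual p q w g
  rw [hw, h1, h2] at this
  exact ⟨g ⬝ᵥ w, by simpa using this⟩

lemma cross_dot_left (p q : Fin 3 → k) : (p ⨯₃ q) ⬝ᵥ p = 0 := by
  rw [dotProduct_comm, dot_self_cross]

lemma cross_dot_right (p q : Fin 3 → k) : (p ⨯₃ q) ⬝ᵥ q = 0 := by
  rw [dotProduct_comm, dot_cross_self]

lemma exists_ker_pair {l : Fin 3 → k} (hl : l ≠ 0) :
    ∃ p q : Fin 3 → k, l ⬝ᵥ p = 0 ∧ l ⬝ᵥ q = 0 ∧ p ⨯₃ q ≠ 0 := by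
  by_cases h0 : l 0 = 0
  · by_cases h1 : l 1 = 0
    · have h2 : l 2 ≠ 0 := by
        intro h2
        apply hl
        funext i
        fin_cases i <;> assumption
      refine ⟨![l 2, 0, - l 0], ![0, l 2, - l 1], ?_, ?_, ?_⟩
      · simp [dotProduct, Fin.sum_univ_three]; ring
      · simp [dotProduct, Fin.sum_univ_three]; ring
      · intro h
        have := congrFun h 2
        simp [cross_apply, h2] at this
    · refine ⟨![l 1, - l 0, 0], ![0, l 2, - l 1], ?_, ?_, ?_⟩
      · simp [dotProduct, Fin.sum_univ_three]; ring
      · simp [dotProduct, Fin.sum_univ_three]; ring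
      · intro h
        have := congrFun h 1
        simp [cross_apply, h1] at this
  · refine ⟨![l 1, - l 0, 0], ![l 2, 0, - l 0], ?_, ?_, ?_⟩
    · simp [dotProduct, Fin.sum_univ_three]; ring
    · simp [dotProduct, Fin.sum_univ_three]; ring
    · intro h
      have := congrFun h 0
      simp [cross_apply, h0] at this

lemma comb_ne_zero {p q : Fin 3 → k} (h : p ⨯₃ q ≠ 0) (t : k) : p + t • q ≠ 0 := by
  intro h0
  apply h
  have : p = (-t) • q := by rw [neg_smul]; exact eq_neg_of_add_eq_zero_left h0
  rw [this]
  simp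

lemma right_ne_zero {p q : Fin 3 → k} (h : p ⨯₃ q ≠ 0) : q ≠ 0 := by
  rintro rfl
  simp at h

lemma no_lin_dvd [IsAlgClosed k] {c : MvPolynomial (Fin 3) k} (hc : IsSmoothPlaneCurve k 3 c)
    {l : Fin 3 → k} (hl : l ≠ 0) : ¬ lin l ∣ c := by
  rintro ⟨Q0, hQ0⟩
  have : Infinite k := IsAlgClosed.instInfinite
  obtain ⟨Q, hQ, hQ1⟩ := homog_quot (A := lin l) (B := Q0) (n := 3) (by norm_num)
    (lin_homog l) (hQ0 ▸ hc.2.1)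
  have hcQ : c = lin l * Q := hQ0.trans hQ1
  have key : ∀ v, v ≠ 0 → l ⬝ᵥ v = 0 → eval v Q ≠ 0 := by
    intro v hv hlv hQv
    obtain ⟨i, hi⟩ := hc.2.2 v hv (by rw [hcQ, map_mul, hQv, mul_zero])
    apply hi
    have := congrFun (grad_mul (lin l) Q v) i
    rw [← hcQ, eval_lin, hlv, hQv] at this
    simpa [grad] using this
  obtain ⟨p, q, hp, hq, hpq⟩ := exists_ker_pair hl
  by_cases hdeg : (ln p q Q).degree = 0
  · have h2 := ln_coeff_top p q hQ
    rw [Polynomial.eq_C_of_degree_eq_zero hdeg, Polynomial.coeff_C] at h2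
    exact key q (right_ne_zero hpq) hq (by simpa using h2.symm)
  · obtain ⟨t, ht⟩ := IsAlgClosed.exists_root _ hdeg
    rw [Polynomial.IsRoot, eval_ln] at ht
    exact key _ (comb_ne_zero hpq t) (by simp [hp, hq]) ht

lemma cancel_lin [IsAlgClosed k] {c : MvPolynomial (Fin 3) k} (hc : IsSmoothPlaneCurve k 3 c)
    {l : Fin 3 → k} (hl : l ≠ 0) {H : MvPolynomial (Fin 3) k} (h : c ∣ lin l * H) : c ∣ H := by
  obtain ⟨g, hg⟩ := h
  have h1 : lin l ∣ c * g := ⟨H, hg.symm⟩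
  rcases (lin_prime hl).dvd_or_dvd h1 with h2 | ⟨g', rfl⟩
  · exact absurd h2 (no_lin_dvd hc hl)
  · refine ⟨g', mul_left_cancel₀ (lin_ne_zero hl) ?_⟩
    rw [hg]; ring

/-- Conditions for a form of degree `d` to vanish on a divisor `Z` of the curve (multiplicities up
to two). -/
def W (c : MvPolynomial (Fin 3) k) (d : ℕ) (Z : Multiset (ProjSpace k 2))
    (F : MvPolynomial (Fin 3) k) : Prop :=
  F.IsHomogeneous d ∧ (∀ s ∈ Z, eval s.rep F = 0) ∧
    ∀ s, s ::ₘ s ::ₘ 0 ≤ Z → ∃ a : k, grad F s.rep = a • grad c s.rep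

lemma cross_rep_ne {p q : ProjSpace k 2} (h : p ≠ q) : p.rep ⨯₃ q.rep ≠ 0 := by
  rw [crossProduct_ne_zero_iff_linearIndependent]
  exact Projectivization.linearIndependent_pair_iff_ne.mpr h

lemma eq_of_smul {p q : ProjSpace k 2} (a : k) (h : p.rep = a • q.rep) : p = q := by
  by_contra hne
  apply cross_rep_ne hne
  rw [h]
  simp

open scoped Classical in
lemma line_aux [IsAlgClosed k] {c : MvPolynomial (Fin 3) k} (hc : IsSmoothPlaneCurve k 3 c)
    {p q : ProjSpace k 2} (hpq : p ≠ q) (hp : eval p.rep c = 0) (hq : eval q.rep c = 0)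
    (hb : grad c q.rep ⬝ᵥ p.rep ≠ 0) :
    ∃ (l : Fin 3 → k) (r : ProjSpace k 2), l ≠ 0 ∧ eval r.rep c = 0 ∧ l ⬝ᵥ p.rep = 0 ∧
      l ⬝ᵥ q.rep = 0 ∧ l ⬝ᵥ r.rep = 0 ∧
      (∀ s : ProjSpace k 2, eval s.rep c = 0 → s ∉ (p ::ₘ q ::ₘ r ::ₘ 0) → l ⬝ᵥ s.rep ≠ 0) ∧
      (∀ s : ProjSpace k 2, (p ::ₘ q ::ₘ r ::ₘ 0).count s = 1 →
        ¬ ∃ a : k, l = a • grad c s.rep) ∧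
      (∀ d F, W c (d+1) (p ::ₘ q ::ₘ r ::ₘ 0) F →
        ∃ F', F'.IsHomogeneous d ∧ c ∣ F - lin l * F') := by
  have : Infinite k := IsAlgClosed.instInfinite
  have hcr := cross_rep_ne hpq
  have hch : c.IsHomogeneous 3 := hc.2.1
  set P := p.rep with hP
  set Q := q.rep with hQ
  set b := grad c Q ⬝ᵥ P with hbdef
  set a := grad c P ⬝ᵥ Q with hadef
  have hγ : ln P Q c = Polynomial.C b * Polynomial.X ^ 2 + Polynomial.C a * Polynomial.X := by
    ext n
    rcases lt_or_ge 3 n with hn | hn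
    · rw [Polynomial.coeff_eq_zero_of_natDegree_lt (lt_of_le_of_lt (ln_natDegree P Q hch) hn)]
      have h1 : n ≠ 2 := by omega
      have h2 : 1 ≠ n := by omega
      simp [Polynomial.coeff_X_pow, Polynomial.coeff_X, h1, h2]
    · interval_cases n
      · rw [ln_coeff_zero, hp]; simp
      · rw [ln_coeff_one]; simp [Polynomial.coeff_X_pow]; rfl
      · rw [ln_coeff_sub P Q hch]; simp [Polynomial.coeff_X_pow, Polynomial.coeff_X]; rfl
      · rw [ln_coeff_top P Q hch, hq]; simp [Polynomial.coeff_X_pow, Polynomial.coeff_X]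
  set τ := -a / b with hτ
  have hbτ : b * τ = -a := by rw [hτ]; field_simp
  have hev : ∀ t, eval (P + t • Q) c = b * t * (t - τ) := by
    intro t
    rw [← eval_ln, hγ]
    simp
    linear_combination t * hbτ
  set R := P + τ • Q with hR
  have hR0 : R ≠ 0 := comb_ne_zero hcr τ
  obtain ⟨u, hu⟩ := Projectivization.exists_smul_eq_mk_rep k R hR0
  set r : ProjSpace k 2 := Projectivization.mk k R hR0 with hr
  have hu' : r.rep = (u : k) • R := hu.symm
  have hu0 : (u : k) ≠ 0 := u.ne_zero
  have hcR : eval R c = 0 := by rw [hR, hev]; ring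
  have hlp : (P ⨯₃ Q) ⬝ᵥ P = 0 := cross_dot_left _ _
  have hlq : (P ⨯₃ Q) ⬝ᵥ Q = 0 := cross_dot_right _ _
  have hlR : (P ⨯₃ Q) ⬝ᵥ R = 0 := by simp [hR, hlp, hlq]
  have hτp : τ = 0 → r = p := by
    intro h0
    apply eq_of_smul (u : k)
    rw [hu', hR, h0]; simp [hP]
  have hmul : ∀ v : Fin 3 → k, (∃ a : k, P ⨯₃ Q = a • v) → v ⬝ᵥ P = 0 ∧ v ⬝ᵥ Q = 0 := by
    rintro v ⟨e, he⟩
    have he0 : e ≠ 0 := by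
      rintro rfl
      apply hcr
      simpa using he
    rw [he, smul_dotProduct, smul_eq_mul] at hlp hlq
    exact ⟨(mul_eq_zero.mp hlp).resolve_left he0, (mul_eq_zero.mp hlq).resolve_left he0⟩
  refine ⟨P ⨯₃ Q, r, hcr, ?_, hlp, hlq, ?_, ?_, ?_, ?_⟩
  · rw [hu', eval_smul' hch, hcR, mul_zero]
  · rw [hu', dotProduct_smul, hlR, smul_zero]
  · intro s hs hsE hls
    obtain ⟨α, β, hαβ⟩ := exists_comb hcr hls
    simp only [Multiset.mem_cons, Multiset.notMem_zero, or_false, not_or] at hsE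
    by_cases hα : α = 0
    · exact hsE.2.1 (eq_of_smul β (by rw [hαβ, hα]; simp [hQ]))
    · have h1 : s.rep = α • (P + (β / α) • Q) := by
        rw [hαβ, smul_add, smul_smul, mul_div_cancel₀ _ hα]
      rw [h1, eval_smul' hch, hev] at hs
      have h2 : (β / α) * (β / α - τ) = 0 := by
        have := (mul_eq_zero.mp hs).resolve_left (pow_ne_zero _ hα)
        rw [mul_assoc] at this
        exact (mul_eq_zero.mp this).resolve_left hb
      rcases mul_eq_zero.mp h2 with h3 | h3
      · exact hsE.1 (eq_of_smul α (by rw [h1, h3]; simp [hP]))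
      · refine hsE.2.2 (eq_of_smul (α * (u : k)⁻¹) ?_)
        rw [h1, hu', sub_eq_zero.mp h3, smul_smul, mul_assoc, inv_mul_cancel₀ hu0, mul_one]
  · intro s hcount hex
    have hh := hmul _ hex
    have hs : s ∈ (p ::ₘ q ::ₘ r ::ₘ 0) := by
      rw [← Multiset.count_pos, hcount]; norm_num
    simp only [Multiset.mem_cons, Multiset.notMem_zero, or_false] at hs
    have hsr : s = p ∨ s = r → τ ≠ 0 := by
      intro h h0
      have h1 := hτp h0
      have h2 : s = p := by rcases h with h | h
                            · exact h
                            · rw [h, h1]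
      rw [h2, h1] at hcount
      simp [hpq] at hcount
    rcases hs with h | h | h
    · subst h
      have : a = 0 := hh.2
      exact hsr (Or.inl rfl) (by rw [hτ, this]; simp)
    · subst h
      exact hb hh.1
    · have hτ0 := hsr (Or.inr h)
      have h1 : grad c R ⬝ᵥ Q = 0 := by
        have := hh.2
        rw [h, hu', grad_smul hch, smul_dotProduct, smul_eq_mul] at this
        exact (mul_eq_zero.mp this).resolve_left (pow_ne_zero _ hu0)
      rw [hR, ← derivative_ln_eval, hγ] at h1
      simp at h1
      apply mul_ne_zero hb hτ0
      linear_combination h1 - hbτ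
  · intro d F hF
    obtain ⟨hFh, hFv, hFt⟩ := hF
    have hFP : eval P F = 0 := hFv p (by simp)
    have hFQ : eval Q F = 0 := hFv q (by simp)
    have hFR : eval R F = 0 := by
      have := hFv r (by simp)
      rw [hu', eval_smul' hFh] at this
      exact (mul_eq_zero.mp this).resolve_left (pow_ne_zero _ hu0)
    obtain ⟨u1, hu1⟩ : Polynomial.X ∣ ln P Q F := by
      rw [Polynomial.X_dvd_iff, ln_coeff_zero, hFP]
    obtain ⟨g0, hg0⟩ : (Polynomial.X - Polynomial.C τ) ∣ u1 := by
      rw [Polynomial.dvd_iff_isRoot, Polynomial.IsRoot]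
      by_cases hτ0 : τ = 0
      · have hrp := hτp hτ0
        obtain ⟨e, he⟩ := hFt p (by
          rw [hrp]
          exact Multiset.cons_le_cons _ (by rw [Multiset.cons_swap]; exact Multiset.cons_le_cons _ (zero_le)))
        have h1 := ln_coeff_one P Q F
        rw [he, smul_dotProduct, hu1, Polynomial.coeff_X_mul] at h1
        have ha : a = 0 := by rw [hτ0, mul_zero] at hbτ; exact (neg_eq_zero.mp hbτ.symm)
        rw [hτ0, ← Polynomial.coeff_zero_eq_eval_zero, h1]
        change e • a = 0
        rw [ha, smul_zero]
      · have h1 := eval_ln P Q F τ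
        rw [← hR, hFR, hu1] at h1
        simp only [Polynomial.eval_mul, Polynomial.eval_X] at h1
        exact (mul_eq_zero.mp h1).resolve_left hτ0
    have hu2 : ln P Q F = Polynomial.X * ((Polynomial.X - Polynomial.C τ) * g0) := by
      rw [hu1, hg0]
    have hdeg : g0 = 0 ∨ g0.natDegree + 2 ≤ d := by
      by_cases hg : g0 = 0
      · exact Or.inl hg
      · right
        have h1 : (ln P Q F).natDegree = g0.natDegree + 2 := by
          rw [hu2, Polynomial.natDegree_mul Polynomial.X_ne_zero
            (mul_ne_zero (Polynomial.X_sub_C_ne_zero τ) hg),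
            Polynomial.natDegree_mul (Polynomial.X_sub_C_ne_zero τ) hg,
            Polynomial.natDegree_X, Polynomial.natDegree_X_sub_C]
          omega
        have h2 := ln_natDegree P Q hFh
        have h3 : (ln P Q F).natDegree ≠ d + 1 := by
          intro h
          have h4 := ln_coeff_top P Q hFh
          rw [hFQ, ← h, Polynomial.coeff_natDegree, Polynomial.leadingCoeff_eq_zero] at h4
          rw [h4] at h
          simp at h
        omega
    obtain ⟨w, hw⟩ := exists_dot_one hcr
    have hpp : (Q ⨯₃ w) ⬝ᵥ P = 1 := by
      rw [dotProduct_comm, triple_product_permutation, triple_product_permutation, dotProduct_comm, hw]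
    have hpq' : (Q ⨯₃ w) ⬝ᵥ Q = 0 := cross_dot_left _ _
    have hqq : (w ⨯₃ P) ⬝ᵥ Q = 1 := by
      rw [dotProduct_comm, triple_product_permutation, dotProduct_comm, hw]
    have hqp : (w ⨯₃ P) ⬝ᵥ P = 0 := cross_dot_right _ _
    let G : MvPolynomial (Fin 3) k := ∑ i ∈ Finset.range (d - 1),
      C (b⁻¹ * g0.coeff i) * (lin (Q ⨯₃ w) ^ (d - 2 - i) * lin (w ⨯₃ P) ^ i)
    have hGe : ∀ t, eval (P + t • Q) G = b⁻¹ * g0.eval t := by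
      intro t
      have h1 : g0.eval t = ∑ i ∈ Finset.range (d - 1), g0.coeff i * t ^ i := by
        rcases hdeg with h | h
        · simp [h]
        · exact Polynomial.eval_eq_sum_range' (by omega) t
      rw [h1, Finset.mul_sum]
      simp only [G, map_sum, map_mul, map_pow, eval_C, eval_lin, dotProduct_add, dotProduct_smul,
        hpp, hpq', hqq, hqp]
      apply Finset.sum_congr rfl
      intro i _
      simp
      ring
    have hcG : (c * G).IsHomogeneous (d + 1) := by
      rcases lt_or_ge d 2 with hd | hd
      · have : d - 1 = 0 := by omega
        have hG0 : G = 0 := by simp [G, this]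
        rw [hG0, mul_zero]
        exact isHomogeneous_zero _ _ _
      · have hG : G.IsHomogeneous (d - 2) := by
          apply IsHomogeneous.sum
          intro i hi
          rw [Finset.mem_range] at hi
          apply IsHomogeneous.C_mul
          have := ((lin_homog (Q ⨯₃ w)).pow (d - 2 - i)).mul ((lin_homog (w ⨯₃ P)).pow i)
          convert this using 1
          omega
        convert hch.mul hG using 1
        omega
    have hv : ∀ v, (P ⨯₃ Q) ⬝ᵥ v = 0 → eval v (F - c * G) = 0 := by
      intro v hv
      obtain ⟨α, β, hαβ⟩ := exists_comb hcr hv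
      by_cases hα : α = 0
      · rw [hαβ, hα, zero_smul, zero_add, eval_smul' (hFh.sub hcG), map_sub, map_mul, hFQ, hq]
        simp
      · have h1 : v = α • (P + (β / α) • Q) := by
          rw [hαβ, smul_add, smul_smul, mul_div_cancel₀ _ hα]
        rw [h1, eval_smul' (hFh.sub hcG), map_sub, map_mul, hev, hGe, ← eval_ln, hu2]
        simp
        right
        field_simp
        ring
    obtain ⟨F0, hF0⟩ := lin_dvd_of_vanish hcr hv
    obtain ⟨F', hF', hF''⟩ := homog_quot (n := d + 1) (by omega) (lin_homog (P ⨯₃ Q))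
      (hF0 ▸ hFh.sub hcG)
    refine ⟨F', hF', G, ?_⟩
    rw [← hF'', ← hF0]
    ring

open scoped Classical in
lemma line_exists [IsAlgClosed k] {c : MvPolynomial (Fin 3) k} (hc : IsSmoothPlaneCurve k 3 c)
    {p q : ProjSpace k 2} (hpq : p ≠ q) (hp : eval p.rep c = 0) (hq : eval q.rep c = 0) :
    ∃ (l : Fin 3 → k) (r : ProjSpace k 2), l ≠ 0 ∧ eval r.rep c = 0 ∧ l ⬝ᵥ p.rep = 0 ∧
      l ⬝ᵥ q.rep = 0 ∧ l ⬝ᵥ r.rep = 0 ∧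
      (∀ s : ProjSpace k 2, eval s.rep c = 0 → s ∉ (p ::ₘ q ::ₘ r ::ₘ 0) → l ⬝ᵥ s.rep ≠ 0) ∧
      (∀ s : ProjSpace k 2, (p ::ₘ q ::ₘ r ::ₘ 0).count s = 1 →
        ¬ ∃ a : k, l = a • grad c s.rep) ∧
      (∀ d F, W c (d+1) (p ::ₘ q ::ₘ r ::ₘ 0) F →
        ∃ F', F'.IsHomogeneous d ∧ c ∣ F - lin l * F') := by
  by_cases hb : grad c q.rep ⬝ᵥ p.rep = 0
  · by_cases ha : grad c p.rep ⬝ᵥ q.rep = 0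
    · exfalso
      have : Infinite k := IsAlgClosed.instInfinite
      have hcr := cross_rep_ne hpq
      have hch : c.IsHomogeneous 3 := hc.2.1
      apply no_lin_dvd hc hcr
      have hγ : ln p.rep q.rep c = 0 := by
        ext n
        rcases lt_or_ge 3 n with hn | hn
        · rw [Polynomial.coeff_eq_zero_of_natDegree_lt (lt_of_le_of_lt (ln_natDegree _ _ hch) hn)]
          simp
        · interval_cases n
          · rw [ln_coeff_zero, hp]; simp
          · rw [ln_coeff_one, ha]; simp
          · rw [ln_coeff_sub _ _ hch, hb]; simp
          · rw [ln_coeff_top _ _ hch, hq]; simp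
      apply lin_dvd_of_vanish hcr
      intro v hv
      obtain ⟨α, β, hαβ⟩ := exists_comb hcr hv
      by_cases hα : α = 0
      · rw [hαβ, hα, zero_smul, zero_add, eval_smul' hch, hq, mul_zero]
      · have h1 : v = α • (p.rep + (β / α) • q.rep) := by
          rw [hαβ, smul_add, smul_smul, mul_div_cancel₀ _ hα]
        rw [h1, eval_smul' hch, ← eval_ln, hγ]
        simp
    · obtain ⟨l, r, h1, h2, h3, h4, h5, h6, h7, h8⟩ := line_aux hc hpq.symm hq hp ha
      rw [Multiset.cons_swap] at h6 h7 h8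
      exact ⟨l, r, h1, h2, h4, h3, h5, h6, h7, h8⟩
  · exact line_aux hc hpq hp hq hb

end SmoothCubic

namespace SmoothCubic

open scoped Matrix
open scoped Classical

variable {k : Type*} [Field k]

lemma pair_le_iff {s : ProjSpace k 2} {Z : Multiset (ProjSpace k 2)} :
    s ::ₘ s ::ₘ 0 ≤ Z ↔ 2 ≤ Z.count s := by
  rw [Multiset.le_count_iff_replicate_le]
  rfl

lemma W_iff {c : MvPolynomial (Fin 3) k} {d : ℕ} {Z : Multiset (ProjSpace k 2)}
    {F : MvPolynomial (Fin 3) k} : W c d Z F ↔ F.IsHomogeneous d ∧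
      ∀ s, (1 ≤ Z.count s → eval s.rep F = 0) ∧
        (2 ≤ Z.count s → ∃ a : k, grad F s.rep = a • grad c s.rep) := by
  unfold W
  simp only [pair_le_iff, Multiset.one_le_count_iff_mem]
  constructor
  · rintro ⟨h1, h2, h3⟩; exact ⟨h1, fun s => ⟨h2 s, h3 s⟩⟩
  · rintro ⟨h1, h2⟩; exact ⟨h1, fun s => (h2 s).1, fun s => (h2 s).2⟩

lemma W_union {c : MvPolynomial (Fin 3) k} {d : ℕ} {Z : Multiset (ProjSpace k 2)}
    {F : MvPolynomial (Fin 3) k} (hF : F.IsHomogeneous d)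
    (h : ∀ s, ∃ Z', W c d Z' F ∧ Z.count s ≤ Z'.count s) : W c d Z F := by
  rw [W_iff]
  refine ⟨hF, fun s => ?_⟩
  obtain ⟨Z', h1, h2⟩ := h s
  rw [W_iff] at h1
  exact ⟨fun h => (h1.2 s).1 (h.trans h2), fun h => (h1.2 s).2 (h.trans h2)⟩

lemma W_mono {c : MvPolynomial (Fin 3) k} {d : ℕ} {Z Z' : Multiset (ProjSpace k 2)}
    {F : MvPolynomial (Fin 3) k} (h : W c d Z' F) (hZ : Z ≤ Z') : W c d Z F :=
  W_union h.1 (fun s => ⟨Z', h, Multiset.count_le_of_le s hZ⟩)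

lemma W_add {c : MvPolynomial (Fin 3) k} {d : ℕ} {Z : Multiset (ProjSpace k 2)}
    {F G : MvPolynomial (Fin 3) k} (hF : W c d Z F) (hG : W c d Z G) : W c d Z (F + G) := by
  refine ⟨hF.1.add hG.1, fun s hs => ?_, fun s hs => ?_⟩
  · rw [map_add, hF.2.1 s hs, hG.2.1 s hs, add_zero]
  · obtain ⟨a, ha⟩ := hF.2.2 s hs
    obtain ⟨b, hb⟩ := hG.2.2 s hs
    exact ⟨a + b, by rw [grad_add, ha, hb, add_smul]⟩

lemma W_C_mul {c : MvPolynomial (Fin 3) k} {d : ℕ} {Z : Multiset (ProjSpace k 2)}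
    {F : MvPolynomial (Fin 3) k} (hF : W c d Z F) (a : k) : W c d Z (C a * F) := by
  refine ⟨hF.1.C_mul a, fun s hs => ?_, fun s hs => ?_⟩
  · rw [map_mul, hF.2.1 s hs, mul_zero]
  · obtain ⟨b, hb⟩ := hF.2.2 s hs
    exact ⟨a * b, by rw [grad_C_mul, hb, smul_smul]⟩

lemma W_of_dvd {c : MvPolynomial (Fin 3) k} {d : ℕ} {Z : Multiset (ProjSpace k 2)}
    {F : MvPolynomial (Fin 3) k} (hF : F.IsHomogeneous d) (h : c ∣ F)
    (hZ : ∀ s ∈ Z, eval s.rep c = 0) : W c d Z F := by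
  obtain ⟨G, rfl⟩ := h
  refine ⟨hF, fun s hs => ?_, fun s hs => ?_⟩
  · rw [map_mul, hZ s hs, zero_mul]
  · have : s ∈ Z := Multiset.mem_of_le hs (by simp)
    exact ⟨eval s.rep G, by rw [grad_mul, hZ s this, zero_smul, zero_add]⟩

lemma exists_tangent [CharZero k] {c : MvPolynomial (Fin 3) k} (hc : IsSmoothPlaneCurve k 3 c)
    {s : Fin 3 → k} (hs0 : s ≠ 0) (hs : eval s c = 0) :
    ∃ t, s ⨯₃ t = grad c s ∧ grad c s ≠ 0 := by
  have hg : grad c s ≠ 0 := by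
    obtain ⟨i, hi⟩ := hc.2.2 s hs0 hs
    intro h
    exact hi (congrFun h i)
  have he : grad c s ⬝ᵥ s = 0 := by rw [euler (d := 3) hc.2.1, hs, mul_zero]
  obtain ⟨w, hw⟩ := exists_dot_one hs0
  refine ⟨grad c s ⨯₃ w, ?_, hg⟩
  generalize grad c s = g at *
  simp only [dotProduct, Fin.sum_univ_three] at he hw
  funext j
  fin_cases j
  · simp [cross_apply]; linear_combination (g 0) * hw - w 0 * he
  · simp [cross_apply]; linear_combination (g 1) * hw - w 1 * he
  · simp [cross_apply]; linear_combination (g 2) * hw - w 2 * he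

/-- One more point is one more linear condition. -/
lemma exists_functional [CharZero k] {c : MvPolynomial (Fin 3) k}
    (hc : IsSmoothPlaneCurve k 3 c) {s : ProjSpace k 2} (hs : eval s.rep c = 0)
    (Z : Multiset (ProjSpace k 2)) :
    ∃ φ : MvPolynomial (Fin 3) k →ₗ[k] k, ∀ d F, W c d Z F → φ F = 0 → W c d (s ::ₘ Z) F := by
  by_cases hsZ : s ∈ Z
  · obtain ⟨t, ht, hg⟩ := exists_tangent hc s.rep_nonzero hs
    refine ⟨∑ i, t i • ((aeval s.rep).toLinearMap.comp (pderiv i).toLinearMap), ?_⟩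
    intro d F hF hφ
    have hφ' : grad F s.rep ⬝ᵥ t = 0 := by
      rw [← hφ]
      simp [grad, dotProduct, mul_comm, aeval_eq_eval]
    refine ⟨hF.1, fun x hx => ?_, fun x hx => ?_⟩
    · rcases Multiset.mem_cons.mp hx with rfl | hx
      · exact hF.2.1 _ hsZ
      · exact hF.2.1 _ hx
    · by_cases hxs : x = s
      · subst hxs
        rw [← ht]
        apply exists_prop (by rw [ht]; exact hg) _ hφ'
        rw [euler hF.1, hF.2.1 _ hsZ, mul_zero]
      · apply hF.2.2
        rw [pair_le_iff] at hx ⊢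
        rwa [Multiset.count_cons_of_ne hxs] at hx
  · refine ⟨(aeval s.rep).toLinearMap, ?_⟩
    intro d F hF hφ
    have hφ' : eval s.rep F = 0 := by
      rw [← hφ]; simp [aeval_eq_eval]
    refine ⟨hF.1, fun x hx => ?_, fun x hx => ?_⟩
    · rcases Multiset.mem_cons.mp hx with rfl | hx
      · exact hφ'
      · exact hF.2.1 _ hx
    · by_cases hxs : x = s
      · subst hxs
        rw [pair_le_iff] at hx
        rw [Multiset.count_cons_self, Multiset.count_eq_zero_of_notMem hsZ] at hx
        omega
      · apply hF.2.2
        rw [pair_le_iff] at hx ⊢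
        rwa [Multiset.count_cons_of_ne hxs] at hx

/-- Divisors with multiplicities at most two on the curve. -/
def Good (c : MvPolynomial (Fin 3) k) (Z : Multiset (ProjSpace k 2)) : Prop :=
  (∀ s ∈ Z, eval s.rep c = 0) ∧ ∀ s, Z.count s ≤ 2

lemma Good.mono {c : MvPolynomial (Fin 3) k} {Z Z' : Multiset (ProjSpace k 2)} (h : Good c Z')
    (hZ : Z ≤ Z') : Good c Z :=
  ⟨fun s hs => h.1 s (Multiset.mem_of_le hZ hs), fun s =>
    (Multiset.count_le_of_le s hZ).trans (h.2 s)⟩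

lemma residual {c : MvPolynomial (Fin 3) k}
    {l : Fin 3 → k} {E Z : Multiset (ProjSpace k 2)} (hZ : Good c Z)
    (hE0 : ∀ s ∈ E, l ⬝ᵥ s.rep = 0)
    (hE1 : ∀ s : ProjSpace k 2, eval s.rep c = 0 → s ∉ E → l ⬝ᵥ s.rep ≠ 0)
    (hE2 : ∀ s : ProjSpace k 2, E.count s = 1 → ¬ ∃ a : k, l = a • grad c s.rep)
    {d : ℕ} {F F' : MvPolynomial (Fin 3) k} (hF : W c (d+1) Z F) (hF' : F'.IsHomogeneous d)
    (hdvd : c ∣ F - lin l * F') : W c d (Z - E) F' := by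
  obtain ⟨G, hG⟩ := hdvd
  have hFG : F = lin l * F' + c * G := by rw [← hG]; ring
  rw [W_iff] at hF ⊢
  have hev : ∀ s : ProjSpace k 2, eval s.rep F = (l ⬝ᵥ s.rep) * eval s.rep F'
      + eval s.rep c * eval s.rep G := by
    intro s; rw [hFG]; simp [eval_lin]
  have hgr : ∀ s : ProjSpace k 2, eval s.rep c = 0 → grad F s.rep =
      (l ⬝ᵥ s.rep) • grad F' s.rep + eval s.rep F' • l + eval s.rep G • grad c s.rep := by
    intro s hs; rw [hFG, grad_add, grad_mul, grad_mul, hs, grad_lin, eval_lin]; simp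
  have h1 : ∀ s, 1 ≤ (Z - E).count s → eval s.rep F' = 0 := by
    intro s hs
    rw [Multiset.count_sub] at hs
    have hsC : eval s.rep c = 0 := hZ.1 s (Multiset.one_le_count_iff_mem.mp (by omega))
    have h2 := hZ.2 s
    have h3 : E.count s = 0 ∨ E.count s = 1 := by omega
    rcases h3 with h3 | h3
    · have := hE1 s hsC (Multiset.count_eq_zero.mp h3)
      have h4 := hev s
      rw [(hF.2 s).1 (by omega), hsC, zero_mul, add_zero] at h4
      exact (mul_eq_zero.mp h4.symm).resolve_left this
    · obtain ⟨a, ha⟩ := (hF.2 s).2 (by omega)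
      have hl0 := hE0 s (Multiset.one_le_count_iff_mem.mp (by omega))
      by_contra hne
      apply hE2 s h3
      have h4 := hgr s hsC
      rw [ha, hl0, zero_smul, zero_add] at h4
      refine ⟨(eval s.rep F')⁻¹ * (a - eval s.rep G), ?_⟩
      rw [mul_smul, sub_smul, h4, add_sub_cancel_right, smul_smul, inv_mul_cancel₀ hne, one_smul]
  refine ⟨hF', fun s => ⟨h1 s, fun hs => ?_⟩⟩
  have hs0 := h1 s (by omega)
  rw [Multiset.count_sub] at hs
  have hsC : eval s.rep c = 0 := hZ.1 s (Multiset.one_le_count_iff_mem.mp (by omega))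
  have h2 := hZ.2 s
  have h3 : E.count s = 0 := by omega
  have hl := hE1 s hsC (Multiset.count_eq_zero.mp h3)
  obtain ⟨a, ha⟩ := (hF.2 s).2 (by omega)
  have h4 := hgr s hsC
  rw [ha, hs0, zero_smul, add_zero] at h4
  refine ⟨(l ⬝ᵥ s.rep)⁻¹ * (a - eval s.rep G), ?_⟩
  rw [mul_smul, sub_smul, h4, add_sub_cancel_right, smul_smul, inv_mul_cancel₀ hl, one_smul]

/-- `W_d(Z)` is at most one-dimensional modulo `c`. -/
def AtMostOne (c : MvPolynomial (Fin 3) k) (d : ℕ) (Z : Multiset (ProjSpace k 2)) : Prop :=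
  ∀ F G, W c d Z F → W c d Z G → ∃ a b : k, (a ≠ 0 ∨ b ≠ 0) ∧ c ∣ C a * F + C b * G

lemma eq_lin {F : MvPolynomial (Fin 3) k} [Infinite k] (hF : F.IsHomogeneous 1) :
    F = lin (grad F 0) := by
  apply MvPolynomial.funext
  intro v
  have h := euler hF v
  have h2 := grad_smul hF 0 v
  simp at h2
  rw [eval_lin, h2, h]
  simp

lemma base [IsAlgClosed k] [CharZero k] {c : MvPolynomial (Fin 3) k}
    (hc : IsSmoothPlaneCurve k 3 c) {Z : Multiset (ProjSpace k 2)} (hZ : Good c Z)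
    (hcard : Z.card = 2) : AtMostOne c 1 Z := by
  have : Infinite k := IsAlgClosed.instInfinite
  obtain ⟨s, t, rfl⟩ := Multiset.card_eq_two.mp hcard
  have key : ∃ n : Fin 3 → k, ∀ F, W c 1 {s, t} F → ∃ a : k, F = C a * lin n := by
    by_cases hst : s = t
    · subst hst
      refine ⟨grad c s.rep, fun F hF => ?_⟩
      obtain ⟨a, ha⟩ := hF.2.2 s le_rfl
      refine ⟨a, ?_⟩
      have h2 := grad_smul hF.1 0 s.rep
      simp at h2
      rw [eq_lin hF.1, h2, ha, lin_smul]
    · refine ⟨s.rep ⨯₃ t.rep, fun F hF => ?_⟩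
      have h1 : grad F 0 ⬝ᵥ s.rep = 0 := by
        rw [← eval_lin, ← eq_lin hF.1]; exact hF.2.1 s (by simp)
      have h2 : grad F 0 ⬝ᵥ t.rep = 0 := by
        rw [← eval_lin, ← eq_lin hF.1]; exact hF.2.1 t (by simp)
      obtain ⟨a, ha⟩ := exists_prop (cross_rep_ne hst) h1 h2
      exact ⟨a, by rw [← lin_smul, ← ha]; exact eq_lin hF.1⟩
  obtain ⟨n, hn⟩ := key
  intro F G hF hG
  obtain ⟨a, rfl⟩ := hn F hF
  obtain ⟨b, rfl⟩ := hn G hG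
  by_cases ha : a = 0
  · exact ⟨1, 0, by simp, by simp [ha]⟩
  · refine ⟨b, -a, by simp [ha], ?_⟩
    have : C b * (C a * lin n) + C (-a) * (C b * lin n) = 0 := by
      rw [C_neg]; ring
    rw [this]
    exact dvd_zero _

lemma dvd_of_C_mul {c F : MvPolynomial (Fin 3) k} {a : k} (ha : a ≠ 0) (h : c ∣ C a * F) :
    c ∣ F := by
  have : F = C a⁻¹ * (C a * F) := by rw [← mul_assoc, ← C_mul, inv_mul_cancel₀ ha, C_1, one_mul]
  rw [this]
  exact Dvd.dvd.mul_left h _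

lemma transfer {c : MvPolynomial (Fin 3) k} {d : ℕ} {Y Z' : Multiset (ProjSpace k 2)}
    (hY : AtMostOne c d Y) {H H' : MvPolynomial (Fin 3) k} (hH : W c d Y H) (hHY : W c d Y H')
    (hn' : ¬ c ∣ H') (hH' : W c d Z' H') (hZ' : ∀ s ∈ Z', eval s.rep c = 0) : W c d Z' H := by
  obtain ⟨a, b, hab, hdvd⟩ := hY H H' hH hHY
  by_cases ha : a = 0
  · exfalso
    subst ha
    apply hn'
    apply dvd_of_C_mul (a := b) (by simpa using hab)
    simpa using hdvd
  · have h1 : H = C (-(a⁻¹ * b)) * H' + C a⁻¹ * (C a * H + C b * H') := by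
      have : C a⁻¹ * C a = (1 : MvPolynomial (Fin 3) k) := by
        rw [← C_mul, inv_mul_cancel₀ ha, C_1]
      rw [C_neg, C_mul]
      linear_combination -H * this
    rw [h1]
    refine W_add (W_C_mul hH' _) (W_of_dvd ?_ (Dvd.dvd.mul_left hdvd _) hZ')
    exact ((hH.1.C_mul a).add (hHY.1.C_mul b)).C_mul _

lemma exists_kernel (x y : k) : ∃ a b : k, (a ≠ 0 ∨ b ≠ 0) ∧ a * x + b * y = 0 := by
  by_cases hx : x = 0
  · exact ⟨1, 0, by simp, by simp [hx]⟩
  · exact ⟨y, -x, by simp [hx], by ring⟩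

lemma three_points {Z : Multiset (ProjSpace k 2)} (h : ∀ s, Z.count s ≤ 2) (hc : 5 ≤ Z.card) :
    ∃ p q r, p ∈ Z ∧ q ∈ Z ∧ r ∈ Z ∧ p ≠ q ∧ p ≠ r ∧ q ≠ r := by
  have h1 : Z.card ≤ Z.toFinset.card * 2 := by
    rw [← Multiset.toFinset_sum_count_eq Z]
    exact Finset.sum_le_card_nsmul _ _ _ (fun s _ => h s)
  obtain ⟨p, q, r, hp, hq, hr, h2⟩ := Finset.two_lt_card_iff.mp (show 2 < Z.toFinset.card by omega)
  rw [Multiset.mem_toFinset] at hp hq hr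
  exact ⟨p, q, r, hp, hq, hr, h2⟩

lemma pair_step [IsAlgClosed k] [CharZero k] {c : MvPolynomial (Fin 3) k}
    (hc : IsSmoothPlaneCurve k 3 c) {d : ℕ}
    (IH : ∀ Y, Good c Y → Y.card = 3 * d + 2 → AtMostOne c (d+1) Y)
    {Z : Multiset (ProjSpace k 2)} (hZ : Good c Z) (hcard : Z.card = 3 * d + 5)
    {p q : ProjSpace k 2} (hpq : p ≠ q) (hp : p ∈ Z) (hq : q ∈ Z) {F G : MvPolynomial (Fin 3) k}
    (hF : W c (d+2) Z F) (hG : W c (d+2) Z G) :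
    (∃ a b : k, (a ≠ 0 ∨ b ≠ 0) ∧ c ∣ C a * F + C b * G) ∨
      ∃ H, W c (d+1) (Z - (p ::ₘ q ::ₘ 0)) H ∧ ¬ c ∣ H := by
  obtain ⟨l, r, hl, hr, hlp, hlq, hlr, hE1, hE2, hdiv⟩ :=
    line_exists hc hpq (hZ.1 p hp) (hZ.1 q hq)
  have hE0 : ∀ s ∈ p ::ₘ q ::ₘ r ::ₘ 0, l ⬝ᵥ s.rep = 0 := by
    intro s hs
    simp only [Multiset.mem_cons, Multiset.notMem_zero, or_false] at hs
    rcases hs with rfl | rfl | rfl <;> assumption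
  by_cases hEZ : p ::ₘ q ::ₘ r ::ₘ 0 ≤ Z
  · left
    obtain ⟨F', hF', hFd⟩ := hdiv (d+1) F (W_mono hF hEZ)
    obtain ⟨G', hG', hGd⟩ := hdiv (d+1) G (W_mono hG hEZ)
    have h1 := residual hZ hE0 hE1 hE2 hF hF' hFd
    have h2 := residual hZ hE0 hE1 hE2 hG hG' hGd
    obtain ⟨a, b, hab, hd⟩ := IH _ (hZ.mono (Multiset.sub_le_self _ _))
      (by rw [Multiset.card_sub hEZ, hcard]; simp) _ _ h1 h2
    refine ⟨a, b, hab, ?_⟩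
    have : C a * F + C b * G = C a * (F - lin l * F') + C b * (G - lin l * G')
      + lin l * (C a * F' + C b * G') := by ring
    rw [this]
    exact dvd_add (dvd_add (Dvd.dvd.mul_left hFd _) (Dvd.dvd.mul_left hGd _))
      (Dvd.dvd.mul_left hd _)
  · obtain ⟨φ, hφ⟩ := exists_functional hc hr Z
    obtain ⟨a, b, hab, h0⟩ := exists_kernel (φ F) (φ G)
    have hK := hφ (d+2) _ (W_add (W_C_mul hF a) (W_C_mul hG b)) (by
      rw [map_add, C_mul', C_mul', map_smul, map_smul]; exact h0)
    have hp1 := Multiset.one_le_count_iff_mem.mpr hp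
    have hq1 := Multiset.one_le_count_iff_mem.mpr hq
    have hEr : p ::ₘ q ::ₘ r ::ₘ 0 ≤ r ::ₘ Z := by
      rw [Multiset.le_iff_count]
      intro s
      simp only [Multiset.count_cons, Multiset.count_zero]
      by_cases h1 : s = p
      · subst h1; simp [hpq]; omega
      · by_cases h2 : s = q
        · subst h2; simp [h1]; omega
        · simp [h1, h2]
    have hrZ : Z.count r ≤ 1 := by
      by_contra hcon
      apply hEZ
      rw [Multiset.le_iff_count]
      intro s
      simp only [Multiset.count_cons, Multiset.count_zero]
      by_cases h3 : s = r
      · subst h3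
        by_cases h1 : s = p
        · subst h1; simp [hpq]; omega
        · simp [h1]; split_ifs <;> omega
      · by_cases h1 : s = p
        · subst h1; simp [hpq, h3]; omega
        · by_cases h2 : s = q
          · subst h2; simp [h1, h3]; omega
          · simp [h1, h2, h3]
    have hgood : Good c (r ::ₘ Z) := by
      refine ⟨fun s hs => ?_, fun s => ?_⟩
      · rcases Multiset.mem_cons.mp hs with rfl | hs
        · exact hr
        · exact hZ.1 s hs
      · rw [Multiset.count_cons]
        have := hZ.2 s
        split_ifs with h
        · subst h; omega
        · omega
    obtain ⟨H, hH, hHd⟩ := hdiv (d+1) _ (W_mono hK hEr)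
    have h1 := residual hgood hE0 hE1 hE2 hK hH hHd
    by_cases hcH : c ∣ H
    · left
      refine ⟨a, b, hab, ?_⟩
      have := dvd_add hHd (Dvd.dvd.mul_left hcH (lin l))
      rwa [sub_add_cancel] at this
    · right
      refine ⟨H, W_mono h1 ?_, hcH⟩
      rw [Multiset.le_iff_count]
      intro s
      simp only [Multiset.count_cons, Multiset.count_zero, Multiset.count_sub]
      omega

/-- A form of degree `d+1` cannot vanish on a divisor of degree `3d+5`, granted `AtMostOne`. -/
lemma weak_bezout [IsAlgClosed k] [CharZero k] {c : MvPolynomial (Fin 3) k}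
    (hc : IsSmoothPlaneCurve k 3 c) {d : ℕ}
    (IH : ∀ Y, Good c Y → Y.card = 3 * d + 2 → AtMostOne c (d+1) Y)
    {Z : Multiset (ProjSpace k 2)} (hZ : Good c Z) (hcard : Z.card = 3 * d + 5)
    {H : MvPolynomial (Fin 3) k} (hH : W c (d+1) Z H) : c ∣ H := by
  by_contra hcH
  obtain ⟨p, q, p3, hp, hq, hp3, hpq, hpp3, hqp3⟩ := three_points hZ.2 (by omega)
  obtain ⟨l, r, hl, hr, hlp, hlq, hlr, hE1, hE2, hdiv⟩ :=
    line_exists hc hpq (hZ.1 p hp) (hZ.1 q hq)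
  have hE0 : ∀ s ∈ p ::ₘ q ::ₘ r ::ₘ 0, l ⬝ᵥ s.rep = 0 := by
    intro s hs
    simp only [Multiset.mem_cons, Multiset.notMem_zero, or_false] at hs
    rcases hs with rfl | rfl | rfl <;> assumption
  -- a second line through `r`
  obtain ⟨m, hm, hmr⟩ : ∃ m, l ⨯₃ m = r.rep ∧ m ⬝ᵥ r.rep = 0 := by
    obtain ⟨w, hw⟩ := exists_dot_one hl
    refine ⟨r.rep ⨯₃ w, ?_, cross_dot_left _ _⟩
    generalize r.rep = g at *
    simp only [dotProduct, Fin.sum_univ_three] at hlr hw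
    funext j
    fin_cases j
    · simp [cross_apply]; linear_combination (g 0) * hw - w 0 * hlr
    · simp [cross_apply]; linear_combination (g 1) * hw - w 1 * hlr
    · simp [cross_apply]; linear_combination (g 2) * hw - w 2 * hlr
  have hK : W c (d+2) (r ::ₘ Z) (H * lin m) := by
    refine ⟨hH.1.mul (lin_homog m), fun s hs => ?_, fun s hs => ?_⟩
    · rw [map_mul, eval_lin]
      rcases Multiset.mem_cons.mp hs with rfl | hs
      · rw [hmr, mul_zero]
      · rw [hH.2.1 s hs, zero_mul]
    · rw [pair_le_iff] at hs
      have hsZ : s ∈ Z := by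
        rw [Multiset.count_cons] at hs
        apply Multiset.one_le_count_iff_mem.mp
        split_ifs at hs <;> omega
      rw [grad_mul, hH.2.1 s hsZ, zero_smul, zero_add, eval_lin]
      by_cases hsr : s = r
      · subst hsr
        exact ⟨0, by rw [hmr]; simp⟩
      · rw [Multiset.count_cons_of_ne hsr, ← pair_le_iff] at hs
        obtain ⟨a, ha⟩ := hH.2.2 s hs
        exact ⟨(m ⬝ᵥ s.rep) * a, by rw [ha, smul_smul]⟩
  have hp1 := Multiset.one_le_count_iff_mem.mpr hp
  have hq1 := Multiset.one_le_count_iff_mem.mpr hq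
  have hr1 := Multiset.one_le_count_iff_mem.mpr hp3
  have key : ∃ Y K, Good c Y ∧ Y.card = 3 * d + 2 ∧ W c (d+1) Y H ∧ W c (d+1) Y K ∧
      c ∣ H * lin m - lin l * K := by
    by_cases hEZ : p ::ₘ q ::ₘ r ::ₘ 0 ≤ Z
    · have hK' := W_mono hK (Multiset.le_cons_self Z r)
      obtain ⟨K, hK1, hK2⟩ := hdiv (d+1) _ (W_mono hK' hEZ)
      have h1 := residual hZ hE0 hE1 hE2 hK' hK1 hK2
      exact ⟨_, K, hZ.mono (Multiset.sub_le_self _ _), by rw [Multiset.card_sub hEZ, hcard]; simp,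
        W_mono hH (Multiset.sub_le_self _ _), h1, hK2⟩
    · have hEr : p ::ₘ q ::ₘ r ::ₘ 0 ≤ r ::ₘ Z := by
        rw [Multiset.le_iff_count]
        intro s
        simp only [Multiset.count_cons, Multiset.count_zero]
        by_cases h1 : s = p
        · subst h1; simp [hpq]; omega
        · by_cases h2 : s = q
          · subst h2; simp [h1]; omega
          · simp [h1, h2]
      have hrZ : Z.count r ≤ 1 := by
        by_contra hcon
        apply hEZ
        rw [Multiset.le_iff_count]
        intro s
        simp only [Multiset.count_cons, Multiset.count_zero]
        by_cases h3 : s = r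
        · subst h3
          by_cases h1 : s = p
          · subst h1; simp [hpq]; omega
          · simp [h1]; split_ifs <;> omega
        · by_cases h1 : s = p
          · subst h1; simp [hpq, h3]; omega
          · by_cases h2 : s = q
            · subst h2; simp [h1, h3]; omega
            · simp [h1, h2, h3]
      have hgood : Good c (r ::ₘ Z) := by
        refine ⟨fun s hs => ?_, fun s => ?_⟩
        · rcases Multiset.mem_cons.mp hs with rfl | hs
          · exact hr
          · exact hZ.1 s hs
        · rw [Multiset.count_cons]
          have := hZ.2 s
          split_ifs with h
          · subst h; omega
          · omega
      obtain ⟨K, hK1, hK2⟩ := hdiv (d+1) _ (W_mono hK hEr)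
      have h1 := residual hgood hE0 hE1 hE2 hK hK1 hK2
      have h3Z : p ::ₘ q ::ₘ p3 ::ₘ 0 ≤ Z := by
        rw [Multiset.le_iff_subset (by simp [hpq, hpp3, hqp3])]
        intro s hs
        simp only [Multiset.mem_cons, Multiset.notMem_zero, or_false] at hs
        rcases hs with rfl | rfl | rfl <;> assumption
      refine ⟨Z - (p ::ₘ q ::ₘ p3 ::ₘ 0), K, hZ.mono (Multiset.sub_le_self _ _),
        by rw [Multiset.card_sub h3Z, hcard]; simp,
        W_mono hH (Multiset.sub_le_self _ _), W_mono h1 ?_, hK2⟩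
      rw [Multiset.le_iff_count]
      intro s
      simp only [Multiset.count_cons, Multiset.count_zero, Multiset.count_sub]
      omega
  obtain ⟨Y, K, hYg, hYc, hHY, hKY, hKd⟩ := key
  obtain ⟨a, b, hab, hd⟩ := IH Y hYg hYc H K hHY hKY
  apply hcH
  apply cancel_lin hc (l := a • l + b • m)
  · intro h0
    have h1 : b • (l ⨯₃ m) = 0 := by
      have := congrArg (fun v => l ⨯₃ v) h0
      simpa using this
    have h2 : a • (l ⨯₃ m) = 0 := by
      have := congrArg (fun v => v ⨯₃ m) h0
      simpa using this
    rw [hm, smul_eq_zero] at h1 h2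
    have h3 := r.rep_nonzero
    rcases hab with h | h
    · exact (h2.resolve_left h) |> h3
    · exact (h1.resolve_left h) |> h3
  · have : lin (a • l + b • m) * H = lin l * (C a * H + C b * K)
        + C b * (H * lin m - lin l * K) := by
      rw [lin_add, lin_smul, lin_smul]; ring
    rw [this]
    exact dvd_add (Dvd.dvd.mul_left hd _) (Dvd.dvd.mul_left hKd _)

theorem at_most_one [IsAlgClosed k] [CharZero k] {c : MvPolynomial (Fin 3) k}
    (hc : IsSmoothPlaneCurve k 3 c) (d : ℕ) :
    ∀ Z, Good c Z → Z.card = 3 * d + 2 → AtMostOne c (d+1) Z := by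
  induction d with
  | zero => intro Z hZ h; exact base hc hZ h
  | succ d IH =>
    intro Z hZ hcard F G hF hG
    by_contra hcon
    have hcard' : Z.card = 3 * d + 5 := by omega
    obtain ⟨p, q, r, hp, hq, hr, hpq, hpr, hqr⟩ := three_points hZ.2 (by omega)
    obtain ⟨H1, hH1, hn1⟩ := (pair_step hc IH hZ hcard' hpq hp hq hF hG).resolve_left hcon
    obtain ⟨H2, hH2, hn2⟩ := (pair_step hc IH hZ hcard' hpr hp hr hF hG).resolve_left hcon
    obtain ⟨H3, hH3, hn3⟩ := (pair_step hc IH hZ hcard' hqr hq hr hF hG).resolve_left hcon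
    have h3Z : p ::ₘ q ::ₘ r ::ₘ 0 ≤ Z := by
      rw [Multiset.le_iff_subset (by simp [hpq, hpr, hqr])]
      intro s hs
      simp only [Multiset.mem_cons, Multiset.notMem_zero, or_false] at hs
      rcases hs with rfl | rfl | rfl <;> assumption
    have hY := IH (Z - (p ::ₘ q ::ₘ r ::ₘ 0)) (hZ.mono (Multiset.sub_le_self _ _))
      (by rw [Multiset.card_sub h3Z, hcard]; simp; omega)
    have hle : ∀ x y, (∀ s, (x ::ₘ y ::ₘ 0).count s ≤ (p ::ₘ q ::ₘ r ::ₘ 0).count s) →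
        Z - (p ::ₘ q ::ₘ r ::ₘ 0) ≤ Z - (x ::ₘ y ::ₘ 0) := by
      intro x y h
      rw [Multiset.le_iff_count]
      intro s
      have := h s
      simp only [Multiset.count_sub]
      omega
    have hY1 := W_mono hH1 (hle p q (fun s => by simp only [Multiset.count_cons]; omega))
    have hY2 := W_mono hH2 (hle p r (fun s => by simp only [Multiset.count_cons]; omega))
    have hY3 := W_mono hH3 (hle q r (fun s => by simp only [Multiset.count_cons]; omega))
    have hW2 := transfer hY hY1 hY2 hn2 hH2 (hZ.mono (Multiset.sub_le_self _ _)).1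
    have hW3 := transfer hY hY1 hY3 hn3 hH3 (hZ.mono (Multiset.sub_le_self _ _)).1
    apply hn1
    apply weak_bezout hc IH hZ hcard'
    apply W_union hH1.1
    intro s
    by_cases h1 : s = p
    · subst h1
      exact ⟨_, hW3, by simp [Multiset.count_sub, hpq, hpr]⟩
    · by_cases h2 : s = q
      · subst h2
        exact ⟨_, hW2, by simp [Multiset.count_sub, h1, hqr]⟩
      · exact ⟨_, hH1, by simp [Multiset.count_sub, h1, h2]⟩

end SmoothCubic

namespace SmoothCubic

open scoped Matrix
open scoped Classical

variable {k : Type*} [Field k]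

section LinAlg
variable {V U : Type*} [AddCommGroup V] [Module k V] [AddCommGroup U] [Module k U]

lemma finrank_step [FiniteDimensional k U] {N N' : Submodule k V} [FiniteDimensional k N]
    [FiniteDimensional k N'] (φ : V →ₗ[k] U) (h : ∀ F ∈ N, φ F = 0 → F ∈ N') :
    Module.finrank k N ≤ Module.finrank k N' + Module.finrank k U := by
  have h1 := LinearMap.finrank_range_add_finrank_ker (φ.domRestrict N)
  have h2 : Module.finrank k (LinearMap.range (φ.domRestrict N)) ≤ Module.finrank k U :=
    Submodule.finrank_le _
  have h3 : Module.finrank k (LinearMap.ker (φ.domRestrict N)) ≤ Module.finrank k N' := by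
    rw [← Submodule.finrank_map_subtype_eq]
    apply Submodule.finrank_mono
    rintro F hF
    rw [Submodule.mem_map] at hF
    obtain ⟨G, hG, rfl⟩ := hF
    exact h _ G.2 hG
  omega

lemma finrank_two {N N' M : Submodule k V} [FiniteDimensional k N'] (hN : N ⊓ M ≤ N')
    (h : ∀ F ∈ N, ∀ G ∈ N, ∃ a b : k, (a ≠ 0 ∨ b ≠ 0) ∧ a • F + b • G ∈ M) :
    Module.finrank k N ≤ Module.finrank k N' + 1 := by
  by_cases hNM : N ≤ M
  · have : N ≤ N' := fun F hF => hN ⟨hF, hNM hF⟩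
    have := Submodule.finrank_mono this
    omega
  · obtain ⟨F, hF, hFM⟩ := SetLike.not_le_iff_exists.1 hNM
    have : N ≤ N' ⊔ Submodule.span k {F} := by
      intro G hG
      obtain ⟨a, b, hab, hM⟩ := h F hF G hG
      have hb : b ≠ 0 := by
        rintro rfl
        simp only [ne_eq, not_true_eq_false, or_false, zero_smul, add_zero] at hab hM
        exact hFM ((Submodule.smul_mem_iff _ hab).1 hM)
      have e : G = b⁻¹ • (a • F + b • G) + (-(b⁻¹ * a)) • F := by
        rw [smul_add, smul_smul, smul_smul, inv_mul_cancel₀ hb, one_smul, neg_smul]; abel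
      rw [e]
      refine Submodule.add_mem_sup (Submodule.smul_mem _ _ (hN ⟨?_, hM⟩))
        (Submodule.smul_mem _ _ (Submodule.mem_span_singleton_self F))
      exact N.add_mem (N.smul_mem _ hF) (N.smul_mem _ hG)
    have h1 := Submodule.finrank_mono this
    have h2 := Submodule.finrank_add_le_finrank_add_finrank N' (Submodule.span k {F})
    have h3 : Module.finrank k (Submodule.span k {F}) ≤ 1 := by
      simpa using finrank_span_le_card (R := k) ({F} : Set V)
    omega

/-- A submodule covered by a linear image has smaller dimension. -/
lemma finrank_inj {N : Submodule k V} {N' : Submodule k U} [FiniteDimensional k N']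
    (f : U →ₗ[k] V) (h : ∀ F ∈ N, ∃ G ∈ N', f G = F) :
    Module.finrank k N ≤ Module.finrank k N' := by
  have : N ≤ N'.map f := fun F hF => by
    obtain ⟨G, hG, e⟩ := h F hF
    exact ⟨G, hG, e⟩
  exact (Submodule.finrank_mono this).trans (Submodule.finrank_map_le f N')

end LinAlg

abbrev P (k : Type*) [Field k] (d : ℕ) := homogeneousSubmodule (Fin 3) k d

instance (d : ℕ) : FiniteDimensional k (P k d) :=
  Module.Finite.iff_fg.2 (homogeneousSubmodule_fg _ _ _)

lemma finrank_P (d : ℕ) : Module.finrank k (P k d) = (d+2).choose 2 := by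
  rw [P, homogeneousSubmodule_eq_finsupp_supported]
  have e : {f : Fin 3 →₀ ℕ | f.degree = d} = (Finset.finsuppAntidiag (Finset.univ : Finset (Fin 3)) d : Set (Fin 3 →₀ ℕ)) := by
    ext f
    simp [Finset.mem_finsuppAntidiag, Finsupp.degree_eq_sum]
  rw [e, (AddMonoidAlgebra.supportedEquivFinsupp (R := k) (S := k) _).finrank_eq,
    Module.finrank_finsupp_self, ← Nat.card_eq_fintype_card,
    Nat.card_coe_set_eq, Set.ncard_coe_finset, Finset.card_finsuppAntidiag_nat_eq_choose]
  simp only [Finset.card_univ, Fintype.card_fin]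
  rw [← Nat.choose_symm_add (a := d) (b := 2)]
  congr 1; omega

/-- W as a submodule. -/
def Wm (c : MvPolynomial (Fin 3) k) (d : ℕ) (Z : Multiset (ProjSpace k 2)) :
    Submodule k (MvPolynomial (Fin 3) k) where
  carrier := {F | W c d Z F}
  add_mem' := W_add
  zero_mem' := ⟨isHomogeneous_zero _ _ _, by simp, fun s _ => ⟨0, by
    simp only [grad, map_zero, zero_smul]; rfl⟩⟩
  smul_mem' := fun a F hF => by
    rw [smul_eq_C_mul]; exact W_C_mul hF a

lemma mem_Wm {c : MvPolynomial (Fin 3) k} {d : ℕ} {Z : Multiset (ProjSpace k 2)}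
    {F : MvPolynomial (Fin 3) k} : F ∈ Wm c d Z ↔ W c d Z F := Iff.rfl

lemma Wm_le (c : MvPolynomial (Fin 3) k) (d : ℕ) (Z : Multiset (ProjSpace k 2)) :
    Wm c d Z ≤ P k d := fun _ hF => hF.1

instance (c : MvPolynomial (Fin 3) k) (d : ℕ) (Z : Multiset (ProjSpace k 2)) :
    FiniteDimensional k (Wm c d Z) := Submodule.finiteDimensional_of_le (Wm_le c d Z)

/-- The double vanishing space. -/
noncomputable def D (d : ℕ) (S : Finset (ProjSpace k 2)) : Submodule k (MvPolynomial (Fin 3) k) :=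
  homogeneousSubmodule (Fin (2+1)) k d ⊓ ⨅ p ∈ S, doubleVanishing k p.rep

lemma h0_eq (d : ℕ) (S : Finset (ProjSpace k 2)) : h0 k 2 d S = Module.finrank k (D d S) := rfl

instance (d : ℕ) (S : Finset (ProjSpace k 2)) : FiniteDimensional k (D d S) :=
  Submodule.finiteDimensional_of_le (S₂ := P k d) inf_le_left

lemma mem_D {d : ℕ} {S : Finset (ProjSpace k 2)} {F : MvPolynomial (Fin 3) k} :
    F ∈ D d S ↔ F.IsHomogeneous d ∧ ∀ s ∈ S, eval s.rep F = 0 ∧ grad F s.rep = 0 := by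
  unfold D doubleVanishing evalLM
  simp only [Submodule.mem_inf, mem_homogeneousSubmodule, Submodule.mem_iInf, LinearMap.mem_ker,
    AlgHom.toLinearMap_apply, LinearMap.comp_apply, funext_iff, grad, coe_aeval_eq_eval]
  rfl

end SmoothCubic

namespace SmoothCubic

open scoped Matrix
open scoped Classical

variable {k : Type*} [Field k]

/-- gradient as a linear map -/
noncomputable def gradL (v : Fin 3 → k) : MvPolynomial (Fin 3) k →ₗ[k] (Fin 3 → k) :=
  LinearMap.pi fun i => (aeval v).toLinearMap.comp (pderiv i).toLinearMap

lemma gradL_apply (v : Fin 3 → k) (F : MvPolynomial (Fin 3) k) : gradL v F = grad F v := rfl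

lemma D_insert [CharZero k] {d : ℕ} (hd : d ≠ 0) (A : Finset (ProjSpace k 2)) (s : ProjSpace k 2) :
    Module.finrank k (D d A) ≤ Module.finrank k (D d (insert s A)) + 3 := by
  have := finrank_step (N := D d A) (N' := D d (insert s A)) (gradL s.rep) (by
    intro F hF h0
    rw [gradL_apply] at h0
    rw [mem_D] at hF ⊢
    refine ⟨hF.1, fun t ht => ?_⟩
    rw [Finset.mem_insert] at ht
    rcases ht with rfl | ht
    · have := euler hF.1 t.rep
      rw [h0, zero_dotProduct] at this
      refine ⟨?_, h0⟩
      rcases mul_eq_zero.1 this.symm with h | h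
      · exact absurd (by exact_mod_cast h) hd
      · exact h
    · exact hF.2 t ht)
  simpa using this

lemma D_subset [CharZero k] {d : ℕ} (hd : d ≠ 0) (A E : Finset (ProjSpace k 2)) :
    Module.finrank k (D d A) ≤ Module.finrank k (D d (A ∪ E)) + 3 * E.card := by
  induction E using Finset.induction_on with
  | empty => rw [Finset.union_empty]; omega
  | insert s E hs IH =>
    have := D_insert hd (A ∪ E) s
    rw [Finset.card_insert_of_notMem hs, Finset.union_insert]
    omega

lemma D_empty (d : ℕ) : Module.finrank k (D (k := k) d ∅) = (d+2).choose 2 := by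
  have : D (k := k) d ∅ = P k d := by
    ext F
    rw [mem_D]; simp
  rw [this, finrank_P]

lemma D_lower [CharZero k] {d : ℕ} (hd : d ≠ 0) (A : Finset (ProjSpace k 2)) :
    (d+2).choose 2 ≤ Module.finrank k (D d A) + 3 * A.card := by
  have := D_subset hd ∅ A
  rwa [D_empty, Finset.empty_union] at this

variable {c : MvPolynomial (Fin 3) k}

lemma choose_step (e : ℕ) : (e + 5).choose 2 = (e + 2).choose 2 + 3 * (e + 3) := by
  have h1 := Nat.triangle_succ (e+4)
  have h2 : (e+3).choose 2 = (e+2).choose 2 + (e+2) := by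
    rw [Nat.choose_succ_succ' (e+2) 1]; simp; omega
  have h3 : (e+4).choose 2 = (e+3).choose 2 + (e+3) := by
    rw [Nat.choose_succ_succ' (e+3) 1]; simp; omega
  have h4 : (e+5).choose 2 = (e+4).choose 2 + (e+4) := by
    rw [Nat.choose_succ_succ' (e+4) 1]; simp; omega
  omega

lemma one_lower (hc : IsSmoothPlaneCurve k 3 c) {e : ℕ} (S : Finset (ProjSpace k 2))
    (hS : ∀ s ∈ S, eval s.rep c = 0) :
    (e+2).choose 2 ≤ Module.finrank k (D (e+3) S) + S.card := by
  have h := finrank_step (N := P k e) (N' := (D (e+3) S).comap (LinearMap.mulLeft k c) ⊓ P k e)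
    (LinearMap.pi fun s : S => (aeval s.1.rep).toLinearMap) (by
      intro G hG h0
      refine ⟨?_, hG⟩
      change c * G ∈ D (e+3) S
      rw [mem_D]
      refine ⟨by rw [add_comm e 3]; exact IsHomogeneous.mul hc.2.1 hG, fun s hs => ?_⟩
      have : eval s.rep G = 0 := congrFun h0 ⟨s, hs⟩
      rw [grad_mul, map_mul, hS s hs, this]
      simp)
  have h2 : Module.finrank k ↥((D (e+3) S).comap (LinearMap.mulLeft k c) ⊓ P k e) ≤
      Module.finrank k (D (e+3) S) := by
    have hinj : Function.Injective (LinearMap.mulLeft k c) := mul_right_injective₀ hc.1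
    rw [(Submodule.equivMapOfInjective _ hinj _).finrank_eq]
    apply Submodule.finrank_mono
    rintro _ ⟨G, hG, rfl⟩
    exact hG.1
  rw [finrank_P] at h
  simp at h
  omega

/-- The ideal generated by `c` as a `k`-submodule. -/
def Ic (c : MvPolynomial (Fin 3) k) : Submodule k (MvPolynomial (Fin 3) k) where
  carrier := {F | c ∣ F}
  add_mem' := dvd_add
  zero_mem' := dvd_zero c
  smul_mem' := fun a F hF => by
    rw [smul_eq_C_mul]; exact Dvd.dvd.mul_left hF _

lemma Wm_cons [CharZero k] (hc : IsSmoothPlaneCurve k 3 c) (d : ℕ) (Z E : Multiset (ProjSpace k 2))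
    (hE : ∀ s ∈ E, eval s.rep c = 0) :
    Module.finrank k (Wm c d Z) ≤ Module.finrank k (Wm c d (E + Z)) + E.card := by
  induction E using Multiset.induction_on with
  | empty => rw [zero_add]; omega
  | cons s E IH =>
    have h1 := IH (fun t ht => hE t (Multiset.mem_cons_of_mem ht))
    obtain ⟨φ, hφ⟩ := exists_functional hc (hE s (Multiset.mem_cons_self s E)) (E + Z)
    have h2 := finrank_step (N := Wm c d (E + Z)) (N' := Wm c d (s ::ₘ (E + Z))) φ
      (fun F hF h => hφ d F hF h)
    rw [Module.finrank_self] at h2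
    rw [Multiset.cons_add, Multiset.card_cons]
    omega

lemma W_upper [IsAlgClosed k] [CharZero k] (hc : IsSmoothPlaneCurve k 3 c) (e : ℕ)
    (Z : Multiset (ProjSpace k 2)) (hZ : Good c Z) (hcard : Z.card = 3 * (e + 2) + 2) :
    Module.finrank k (Wm c (e+3) Z) ≤ (e+2).choose 2 + 1 := by
  have h := at_most_one hc (e+2) Z hZ hcard
  rw [← finrank_P (k := k) e]
  refine (finrank_two (N := Wm c (e+3) Z) (M := Ic c) (N' := (P k e).map (LinearMap.mulLeft k c))
    ?_ ?_).trans (Nat.add_le_add_right (Submodule.finrank_map_le _ _) 1)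
  · rintro F ⟨hF, G, rfl⟩
    obtain ⟨G', hG', e'⟩ := homog_quot (n := e + 3) (by omega) hc.2.1 hF.1
    exact ⟨G', hG', e'.symm⟩
  · intro F hF G hG
    obtain ⟨a, b, hab, hd⟩ := h F G hF hG
    refine ⟨a, b, hab, ?_⟩
    rw [smul_eq_C_mul, smul_eq_C_mul]; exact hd

lemma good_add {B B' : Finset (ProjSpace k 2)} (hB : ∀ s ∈ B, eval s.rep c = 0)
    (hB' : B' ⊆ B) : Good c (B'.val + B.val) := by
  refine ⟨fun s hs => ?_, fun s => ?_⟩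
  · rcases Multiset.mem_add.1 hs with h | h
    · exact hB s (hB' h)
    · exact hB s h
  · rw [Multiset.count_add]
    have h1 := Multiset.nodup_iff_count_le_one.1 B.nodup s
    have h2 := Multiset.nodup_iff_count_le_one.1 B'.nodup s
    omega

/-- simple points on the cubic impose independent conditions -/
lemma W_simple [IsAlgClosed k] [CharZero k] (hc : IsSmoothPlaneCurve k 3 c) (e : ℕ)
    (B : Finset (ProjSpace k 2)) (hB : ∀ s ∈ B, eval s.rep c = 0)
    (h1 : B.card ≤ 3 * e + 8) (h2 : 3 * e + 8 ≤ 2 * B.card) :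
    Module.finrank k (Wm c (e+3) B.val) + B.card ≤ (e+5).choose 2 := by
  obtain ⟨B', hB', hcard⟩ := Finset.exists_subset_card_eq (s := B) (n := 3 * e + 8 - B.card)
    (by omega)
  have h3 := W_upper hc e (B'.val + B.val) (good_add hB hB')
    (by rw [Multiset.card_add, Finset.card_val, Finset.card_val]; omega)
  have h4 := Wm_cons hc (e+3) B.val B'.val (fun s hs => hB s (hB' hs))
  rw [Finset.card_val] at h4
  rw [choose_step]
  omega

lemma D_upper [IsAlgClosed k] [CharZero k] (hc : IsSmoothPlaneCurve k 3 c) (e : ℕ)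
    (B : Finset (ProjSpace k 2)) (hB : ∀ s ∈ B, eval s.rep c = 0)
    (hcard : 2 * B.card = 3 * e + 17) :
    Module.finrank k (D (e+6) B) + 3 * B.card ≤ (e+8).choose 2 := by
  have h := at_most_one hc (e+5) (B.val + B.val) (good_add hB (Finset.Subset.refl _))
    (by rw [Multiset.card_add, Finset.card_val]; omega)
  have hs := W_simple hc e B hB (by omega) (by omega)
  have key := finrank_two (N := D (e+6) B) (M := Ic c)
    (N' := (Wm c (e+3) B.val).map (LinearMap.mulLeft k c)) (by
    rintro F ⟨hF, G, rfl⟩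
    have hF' := mem_D.1 hF
    obtain ⟨G', hG', e'⟩ := homog_quot (n := e + 6) (by omega) hc.2.1 hF'.1
    refine ⟨G', ⟨hG', fun s hs => ?_, fun s hs => ?_⟩, e'.symm⟩
    · have := (hF'.2 s hs).2
      rw [e', grad_mul, hB s hs, zero_smul, zero_add] at this
      obtain ⟨i, hi⟩ := hc.2.2 s.rep s.rep_nonzero (hB s hs)
      rcases smul_eq_zero.1 this with h | h
      · exact h
      · exact absurd (congrFun h i) hi
    · rw [pair_le_iff] at hs
      have h1 := Multiset.nodup_iff_count_le_one.1 B.nodup s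
      omega) (by
    have hW : ∀ F ∈ D (e+6) B, W c (e+5+1) (B.val + B.val) F := fun F hF => by
      have hF' := mem_D.1 hF
      have hm : ∀ s, s ∈ B.val + B.val → s ∈ B := fun s hs => by simpa using hs
      refine ⟨hF'.1, fun s hs => (hF'.2 s (hm s hs)).1, fun s hs => ⟨0, ?_⟩⟩
      rw [zero_smul]
      exact (hF'.2 s (hm s (Multiset.mem_of_le hs (by simp)))).2
    intro F hF G hG
    obtain ⟨a, b, hab, hd⟩ := h F G (hW F hF) (hW G hG)
    refine ⟨a, b, hab, ?_⟩
    rw [smul_eq_C_mul, smul_eq_C_mul]; exact hd)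
  have h5 := Submodule.finrank_map_le (LinearMap.mulLeft k c) (Wm c (e+3) B.val)
  have h6 := choose_step (e+3)
  have h7 := choose_step e
  have : e + 3 + 5 = e + 8 := rfl
  have : e + 3 + 2 = e + 5 := rfl
  simp only [this, *] at h6
  omega

lemma spans [IsAlgClosed k] (hc : IsSmoothPlaneCurve k 3 c)
    (S : Finset (ProjSpace k 2)) (hS : ∀ s ∈ S, eval s.rep c = 0) (hcard : 4 ≤ S.card) :
    Spans k 2 S := by
  obtain ⟨p, hp, q, hq, hpq⟩ := Finset.one_lt_card.1 (show 1 < S.card by omega)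
  obtain ⟨l, r, hl, -, hlp, hlq, -, hall, -, -⟩ := line_exists hc hpq (hS p hp) (hS q hq)
  obtain ⟨s, hs, hs'⟩ : ∃ s ∈ S, s ∉ ({p, q, r} : Finset (ProjSpace k 2)) := by
    by_contra! hcon
    have := Finset.card_le_card (show S ⊆ {p, q, r} from hcon)
    have := Finset.card_le_three (a := p) (b := q) (c := r)
    omega
  have hls := hall s (hS s hs) (by simpa using hs')
  unfold Spans
  by_contra hne
  obtain ⟨f, hf, hker⟩ := Submodule.exists_le_ker_of_lt_top _ (lt_top_iff_ne_top.2 hne)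
  set m : Fin 3 → k := fun i => f (Pi.single i 1) with hm
  have hfm : ∀ v : Fin 3 → k, f v = m ⬝ᵥ v := fun v => by
    conv_lhs => rw [pi_eq_sum_univ' v]
    rw [map_sum]
    simp only [map_smul, dotProduct, hm, smul_eq_mul]
    refine Finset.sum_congr rfl fun i _ => ?_
    rw [mul_comm]
  have hv : ∀ t ∈ S, m ⬝ᵥ t.rep = 0 := fun t ht => by
    rw [← hfm]
    exact hker (Submodule.subset_span ⟨t, ht, rfl⟩)
  obtain ⟨a, ha⟩ := exists_prop (cross_rep_ne hpq) (hv p hp) (hv q hq)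
  obtain ⟨b, hb⟩ := exists_prop (cross_rep_ne hpq) hlp hlq
  have ha0 : a ≠ 0 := by
    rintro rfl
    apply hf
    apply LinearMap.ext
    intro v
    rw [hfm, ha, zero_smul, zero_dotProduct]; rfl
  have h0 := hv s hs
  rw [ha, smul_dotProduct, smul_eq_mul] at h0
  apply hls
  rw [hb, smul_dotProduct, (mul_eq_zero.1 h0).resolve_left ha0, smul_zero]

end SmoothCubic

/-- Example: for odd `d ≥ 7` and `x = (3d+1)/2`, any set of `x` points on a smooth plane
cubic is minimally Terracini; in particular `T(2,d;(3d+1)/2)' ≠ ∅`. -/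
theorem smooth_cubic_points_minTerracini
    (k : Type*) [Field k] [IsAlgClosed k] [CharZero k]
    (d : ℕ) (hd : 7 ≤ d) (hodd : Odd d)
    (c : MvPolynomial (Fin 3) k) (hc : IsSmoothPlaneCurve k 3 c)
    (S : Finset (ProjSpace k 2)) (hS : ↑S ⊆ projZeroLocus k 2 c)
    (hcard : S.card = (3 * d + 1) / 2) :
    S ∈ minTerracini k 2 d ((3 * d + 1) / 2) ∧
      (minTerracini k 2 d ((3 * d + 1) / 2)).Nonempty := by
  classical
  have hS' : ∀ s ∈ S, eval s.rep c = 0 := fun s hs => hS hs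
  have main : S ∈ minTerracini k 2 d ((3 * d + 1) / 2) := by
    obtain ⟨e, rfl⟩ : ∃ e, d = e + 6 := ⟨d - 6, by omega⟩
    obtain ⟨j, hj⟩ := hodd
    have h1 := SmoothCubic.one_lower hc (e := e + 3) S hS'
    have h6 := SmoothCubic.choose_step (e+3)
    have h7 := SmoothCubic.choose_step e
    have e1 : e + 3 + 5 = e + 8 := rfl
    have e2 : e + 3 + 2 = e + 5 := rfl
    have e3 : e + 3 + 3 = e + 6 := rfl
    have e4 : e + 6 + 2 = e + 8 := rfl
    have e5 : 2 + (e + 6) = e + 8 := by omega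
    rw [e2, e3] at h1
    rw [e1, e2, e3] at h6
    have hpos : 3 ≤ (e + 2).choose 2 := Nat.choose_le_choose (c := 2) (show 3 ≤ e + 2 by omega)
    refine ⟨⟨hcard, SmoothCubic.spans hc S hS' (by omega), ?_, ?_⟩, ?_⟩
    · rw [SmoothCubic.h0_eq]; omega
    · rw [_root_.h1, SmoothCubic.h0_eq, e5]
      push_cast
      omega
    · intro A hA
      obtain ⟨B, hAB, hBS, hB⟩ := Finset.exists_subsuperset_card_eq hA.subset
        (n := S.card - 1) (by have := Finset.card_lt_card hA; omega) (by omega)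
      have u := SmoothCubic.D_upper hc e B (fun s hs => hS' s (hBS hs)) (by omega)
      have l := SmoothCubic.D_lower (d := e + 6) (by omega) A
      have m := SmoothCubic.D_subset (d := e + 6) (by omega) A (B \ A)
      rw [Finset.union_sdiff_of_subset hAB, Finset.card_sdiff_of_subset hAB] at m
      have := Finset.card_le_card hAB
      rw [e4] at l
      rw [_root_.h1, SmoothCubic.h0_eq, e5]
      push_cast
      omega
  exact ⟨main, S, main⟩
end
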